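/- arXiv:2308.15447 — 2 statements merged into one kernel-verified Lean document; each statement's English description precedes it below -/
import Mathlib

section
/- Let M ⊂ ℝ² be a bounded, simply connected open set with smooth boundary. Let ψ : M̄ → ℝ be a smooth stream function with ψ = c* > 0 on ∂M, set u_e := ∇^⊥ψ = (−∂₂ψ, ∂₁ψ), and suppose Δψ = F(ψ) in M for some continuously differentiable function F : ℝ → ℝ (so u_e is a steady Euler flow whose vorticity is a C¹ function of the streamfunction). Suppose ψ has a unique critical point in M, that the range of ψ is [0, c*], that for every c ∈ (0, c*] the level set {ψ = c} is a smooth closed curve, and that the circulation ∮_{{ψ=c}} u_e · dℓ is nonzero for every c ∈ (0, c*]. Suppose that for each ν > 0 there is a smooth steady solution (u^ν, p^ν) of the Navier–Stokes equations u^ν·∇u^ν = −∇p^ν + νΔu^ν, div u^ν = 0 in M, such that as ν → 0, u^ν → u_e together with its first and second partial derivatives uniformly on every compact subset of M (in particular the vorticities ω^ν := curl u^ν converge to ω_e := Δψ in C¹ on compact subsets). Then F′(c) = 0 for every c ∈ [0, c*]; that is, F is constant and the Euler flow u_e has constant vorticity: Δψ ≡ ω₀ in M for some constant ω₀ ∈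 ℝ. -/
open MeasureTheory Set Function

noncomputable def pd1 (f : ℝ × ℝ → ℝ) (x : ℝ × ℝ) : ℝ := deriv (fun a => f (a, x.2)) x.1
noncomputable def pd2 (f : ℝ × ℝ → ℝ) (x : ℝ × ℝ) : ℝ := deriv (fun a => f (x.1, a)) x.2
noncomputable def lap (f : ℝ × ℝ → ℝ) (x : ℝ × ℝ) : ℝ := pd1 (pd1 f) x + pd2 (pd2 f) x

/-! On a simply connected domain the Navier–Stokes velocities `u` have stream functions `g`, which
converge locally uniformly to `ψ` together with `u → ∇^⊥ψ`. The Bernoulli head `B = p + |u|² / 2`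
satisfies `u · ∇B = ν u · Δu`, and every function `η ∘ g` is constant along the flow, so
`div (η(g) B u) = ν η(g) u · Δu`. When `η` vanishes near the boundary values of `ψ`, integration
removes the left-hand side, and since the viscosity is a common factor,
`∫ η(g) u · Δu = 0` for every `ν`; in the limit the same holds for `ψ` and `∇^⊥ψ`. This plays the
role of the classical integration over a streamline and needs no description of the level sets.

If `Δψ = F(ψ)`, then `∇^⊥ψ · Δ∇^⊥ψ = F'(ψ) |∇ψ|²`. Localizing `η` at a value near which `F'` has
one sign gives `∇Δψ = F'(ψ) ∇ψ = 0` wherever `ψ` does not take a boundary value. Where `∇Δψ ≠ 0`,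
`ψ` would be open with all its values among the boundary values; hence `Δψ` is constant.

The stream functions are obtained by gluing: the local primitives of a closed one-form are the
sections of a covering space, and over a simply connected base these extend to global ones. -/

open Filter Topology

section Gluing

open Bundle

/-- Potentials on the members of an open cover, any two of which differ by a locally constant
function on their overlap: the Čech data of a closed one-form. -/
structure LocalPotentials (ι X G : Type*) [TopologicalSpace X] [AddCommGroup G] where
  domain : ι → Set X
  isOpen_domain (i : ι) : IsOpen (domain i)
  indexAt : X → ι
  mem_domain_indexAt (x : X) : x ∈ domain (indexAt x)
  potential : ι → X → G
  eventually_sub_eq {i j : ι} {x : X} (hi : x ∈ domain i) (hj : x ∈ domain j) :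
    ∀ᶠ y in 𝓝 x, potential i y - potential j y = potential i x - potential j x

namespace LocalPotentials

variable {ι X G : Type*} [TopologicalSpace X] [AddCommGroup G] (P : LocalPotentials ι X G)

/-- The sheaf of global potentials as a bundle with discrete fibres: `v` over `x` in the chart `i`
stands for the germ at `x` of `v + P.potential i`. -/
def bundleCore : FiberBundleCore ι X (WithDiscreteTopology G) where
  baseSet := P.domain
  isOpen_baseSet := P.isOpen_domain
  indexAt := P.indexAt
  mem_baseSet_at := P.mem_domain_indexAt
  coordChange i j x v := .toTopology ⊥ (v.ofTopology + (P.potential i x - P.potential j x))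
  coordChange_self i x _ v := by simp
  continuousOn_coordChange i j := by
    rintro ⟨x, v⟩ ⟨⟨hi, hj⟩, -⟩
    have hshift : ∀ᶠ q : X × WithDiscreteTopology G in 𝓝 (x, v),
        P.potential i q.1 - P.potential j q.1 = P.potential i x - P.potential j x :=
      (continuous_fst.tendsto (x, v)).eventually (P.eventually_sub_eq hi hj)
    have hcont : Continuous fun q : X × WithDiscreteTopology G ↦
        WithTopology.toTopology ⊥ (q.2.ofTopology + (P.potential i x - P.potential j x)) :=
      (continuous_of_discreteTopology (f := fun w : WithDiscreteTopology G ↦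
        WithTopology.toTopology ⊥ (w.ofTopology + _))).comp continuous_snd
    refine (hcont.continuousAt.congr ?_).continuousWithinAt
    filter_upwards [hshift] with q hq
    rw [hq]
  coordChange_comp i j k x _ v := by simp [add_assoc]

theorem exists_eventually_sub_eq [SimplyConnectedSpace X] [LocallyPathConnectedSpace X] :
    ∃ g : X → G, ∀ i, ∀ x ∈ P.domain i,
      ∀ᶠ y in 𝓝 x, g y - P.potential i y = g x - P.potential i x := by
  let Z := P.bundleCore
  have hcov : IsCoveringMap (TotalSpace.proj : Z.TotalSpace → X) := FiberBundle.isCoveringMap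
  obtain ⟨x₀⟩ : Nonempty X := inferInstance
  obtain ⟨s, ⟨-, hs⟩, -⟩ := hcov.existsUnique_continuousMap_lifts (ContinuousMap.id X) x₀
    (⟨x₀, .toTopology ⊥ 0⟩ : Z.TotalSpace) rfl
  have hproj (x : X) : (s x).proj = x := congrFun hs x
  let g (x : X) : G := WithTopology.ofTopology (s x).2 + P.potential (P.indexAt x) x
  refine ⟨g, fun i x hx ↦ ?_⟩
  have hcoord (y : X) : ((Z.localTriv i (s y)).2).ofTopology = g y - P.potential i y := by
    change WithTopology.ofTopology (s y).2 + (P.potential (P.indexAt (s y).proj) (s y).proj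
      - P.potential i (s y).proj) = _
    rw [hproj, add_sub_assoc]
  have hcont : ContinuousAt (fun y ↦ (Z.localTriv i (s y)).2) x := by
    refine continuous_snd.continuousAt.comp
      (((Z.localTriv i).continuousAt ?_).comp s.continuous.continuousAt)
    rw [Z.mem_localTriv_source, hproj]
    exact hx
  have hconst : ∀ᶠ y in 𝓝 x, (Z.localTriv i (s y)).2 = (Z.localTriv i (s x)).2 := by
    simpa [ContinuousAt, nhds_discrete] using hcont
  filter_upwards [hconst] with y hy
  rw [← hcoord, ← hcoord, hy]

end LocalPotentials

end Gluing

section Primitive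

variable {E F : Type*} [NormedAddCommGroup E] [NormedSpace ℝ E]
  [NormedAddCommGroup F] [NormedSpace ℝ F]

theorem eventually_sub_eq_of_hasFDerivAt {f g : E → F} {w : E → E →L[ℝ] F} {x : E}
    (hf : ∀ᶠ y in 𝓝 x, HasFDerivAt f (w y) y) (hg : ∀ᶠ y in 𝓝 x, HasFDerivAt g (w y) y) :
    ∀ᶠ y in 𝓝 x, f y - g y = f x - g x := by
  obtain ⟨r, hr, h⟩ := Metric.eventually_nhds_iff_ball.1 (hf.and hg)
  obtain ⟨a, ha⟩ := Metric.isOpen_ball.exists_eq_add_of_fderiv_eq (convex_ball x r).isPreconnected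
    (fun y hy ↦ (h y hy).1.differentiableAt.differentiableWithinAt)
    (fun y hy ↦ (h y hy).2.differentiableAt.differentiableWithinAt)
    fun y hy ↦ (h y hy).1.fderiv.trans (h y hy).2.fderiv.symm
  filter_upwards [Metric.ball_mem_nhds x hr] with y hy
  rw [ha hy, ha (Metric.mem_ball_self hr), add_sub_cancel_left, add_sub_cancel_left]

theorem exists_hasFDerivAt_of_eventually {M : Set E} [SimplyConnectedSpace M] (hM : IsOpen M)
    {w : E → E →L[ℝ] F}
    (hw : ∀ x ∈ M, ∃ f : E → F, ∀ᶠ y in 𝓝 x, HasFDerivAt f (w y) y) :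
    ∃ g : E → F, ∀ x ∈ M, HasFDerivAt g (w x) x := by
  have : LocallyPathConnectedSpace M := hM.locallyPathConnectedSpace
  choose f hf using fun x : M ↦ hw x x.2
  have hmap (x : M) : map ((↑) : M → E) (𝓝 x) = 𝓝 (x : E) :=
    map_nhds_subtype_coe_eq_nhds x.2 (hM.mem_nhds x.2)
  let P : LocalPotentials M M F :=
    { domain i := {y | ∀ᶠ z in 𝓝 (y : E), HasFDerivAt (f i) (w z) z}
      isOpen_domain i := isOpen_setOfPred_eventually_nhds.preimage continuous_subtype_val
      indexAt := id
      mem_domain_indexAt := hf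
      potential i y := f i y
      eventually_sub_eq {_ _} x hi hj := by
        have := eventually_sub_eq_of_hasFDerivAt hi hj
        rwa [← hmap x, eventually_map] at this }
  obtain ⟨g, hg⟩ := P.exists_eventually_sub_eq
  obtain ⟨g', hg'⟩ : ∃ g' : E → F, ∀ x : M, g' x = g x :=
    ⟨Function.extend (↑) g (0 : E → F), Subtype.val_injective.extend_apply g 0⟩
  refine ⟨g', fun x hx ↦ ?_⟩
  lift x to M using hx
  have hloc : ∀ᶠ y in 𝓝 (x : E), g' y = f x y + (g x - f x x) := by
    rw [← hmap x, eventually_map]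
    filter_upwards [hg x x (hf x)] with y hy
    rw [hg', ← sub_eq_iff_eq_add', hy]
  exact ((hf x).self_of_nhds.add_const _).congr_of_eventuallyEq hloc

theorem exists_hasFDerivAt_of_fderiv_symmetric [CompleteSpace F] {M : Set E}
    [SimplyConnectedSpace M] (hM : IsOpen M) {w : E → E →L[ℝ] F} (hw : DifferentiableOn ℝ w M)
    (hsymm : ∀ x ∈ M, ∀ a b, fderiv ℝ w x a b = fderiv ℝ w x b a) :
    ∃ g : E → F, ∀ x ∈ M, HasFDerivAt g (w x) x := by
  refine exists_hasFDerivAt_of_eventually hM fun x hx ↦ ?_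
  obtain ⟨r, hr, hrM⟩ := Metric.isOpen_iff.1 hM x hx
  obtain ⟨f, hf⟩ := (convex_ball x r).exists_forall_hasFDerivAt_of_fderiv_symmetric
    Metric.isOpen_ball (hw.mono hrM) fun y hy ↦ hsymm y (hrM hy)
  exact ⟨f, mem_of_superset (Metric.ball_mem_nhds x hr) hf⟩

end Primitive

section UniformLimits

variable {ι E F : Type*} {l : Filter ι} [NormedAddCommGroup E] [NormedSpace ℝ E]
  [NormedAddCommGroup F] [NormedSpace ℝ F] {f : ι → E → F} {g : E → F}
  {f' : ι → E → E →L[ℝ] F} {g' : E → E →L[ℝ] F}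

theorem tendstoUniformlyOn_of_hasFDerivWithinAt {s : Set E} (hs : Convex ℝ s)
    (hsb : Bornology.IsBounded s) (hf : ∀ᶠ i in l, ∀ x ∈ s, HasFDerivWithinAt (f i) (f' i x) s x)
    (hg : ∀ x ∈ s, HasFDerivWithinAt g (g' x) s x) (hf' : TendstoUniformlyOn f' g' l s)
    {x₀ : E} (hx₀ : x₀ ∈ s) (h₀ : Tendsto (fun i ↦ f i x₀) l (𝓝 (g x₀))) :
    TendstoUniformlyOn f g l s := by
  obtain ⟨R, hR⟩ := hsb.subset_ball x₀
  rw [Metric.tendstoUniformlyOn_iff] at hf' ⊢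
  intro ε hε
  obtain ⟨q, hq, hqR⟩ := exists_pos_mul_lt (half_pos hε) R
  filter_upwards [hf, hf' q hq, Metric.tendsto_nhds.1 h₀ (ε / 2) (half_pos hε)]
    with i hfi hfi' hi₀ x hx
  have hmean : ‖(f i x - g x) - (f i x₀ - g x₀)‖ ≤ q * ‖x - x₀‖ :=
    hs.norm_image_sub_le_of_norm_hasFDerivWithin_le (f := fun y ↦ f i y - g y)
      (fun y hy ↦ (hfi y hy).sub (hg y hy))
      (fun y hy ↦ by rw [← dist_eq_norm, dist_comm]; exact (hfi' y hy).le) hx₀ hx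
  have hxR : ‖x - x₀‖ ≤ R := (mem_ball_iff_norm.1 (hR hx)).le
  calc dist (g x) (f i x) = ‖((f i x - g x) - (f i x₀ - g x₀)) + (f i x₀ - g x₀)‖ := by
        rw [sub_add_cancel, dist_comm, dist_eq_norm]
    _ ≤ ‖(f i x - g x) - (f i x₀ - g x₀)‖ + ‖f i x₀ - g x₀‖ := norm_add_le _ _
    _ < q * R + ε / 2 := by
        refine add_lt_add_of_le_of_lt (hmean.trans ?_) (by rwa [← dist_eq_norm])
        gcongr
    _ < ε := by linarith

theorem tendstoLocallyUniformlyOn_of_hasFDerivAt [ProperSpace E] {M : Set E} (hM : IsOpen M)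
    (hMc : IsPreconnected M) (hf : ∀ᶠ i in l, ∀ x ∈ M, HasFDerivAt (f i) (f' i x) x)
    (hg : ∀ x ∈ M, HasFDerivAt g (g' x) x) (hf' : TendstoLocallyUniformlyOn f' g' l M)
    {x₀ : E} (hx₀ : x₀ ∈ M) (h₀ : Tendsto (fun i ↦ f i x₀) l (𝓝 (g x₀))) :
    TendstoLocallyUniformlyOn f g l M := by
  have hball : ∀ x ∈ M, ∃ s ∈ 𝓝 x, ∀ y ∈ s, Tendsto (fun i ↦ f i y) l (𝓝 (g y)) →
      TendstoUniformlyOn f g l s := fun x hx ↦ by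
    obtain ⟨r, hr, hrM⟩ := Metric.nhds_basis_closedBall.mem_iff.1 (hM.mem_nhds hx)
    refine ⟨_, Metric.closedBall_mem_nhds x hr, fun y hy ↦ ?_⟩
    refine tendstoUniformlyOn_of_hasFDerivWithinAt (convex_closedBall x r)
      Metric.isBounded_closedBall ?_ (fun z hz ↦ (hg z (hrM hz)).hasFDerivWithinAt)
      ((tendstoLocallyUniformlyOn_iff_forall_isCompact hM).1 hf' _ hrM (isCompact_closedBall x r))
      hy
    filter_upwards [hf] with i hi z hz using (hi z (hrM hz)).hasFDerivWithinAt
  have hpt : ∀ x ∈ M, Tendsto (fun i ↦ f i x) l (𝓝 (g x)) := fun x hx ↦ by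
    refine hMc.induction₂' (fun x y ↦ Tendsto (fun i ↦ f i x) l (𝓝 (g x)) →
      Tendsto (fun i ↦ f i y) l (𝓝 (g y))) (fun y hy ↦ ?_)
      (fun _ _ _ _ _ _ hxy hyz ↦ hyz ∘ hxy) hx₀ hx h₀
    obtain ⟨s, hs, h⟩ := hball y hy
    filter_upwards [mem_nhdsWithin_of_mem_nhds hs] with z hz
    exact ⟨fun H ↦ (h y (mem_of_mem_nhds hs) H).tendsto_at hz,
      fun H ↦ (h z hz H).tendsto_at (mem_of_mem_nhds hs)⟩
  refine tendstoLocallyUniformlyOn_of_forall_exists_nhds fun x hx ↦ ?_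
  obtain ⟨s, hs, h⟩ := hball x hx
  exact ⟨s, mem_nhdsWithin_of_mem_nhds hs, h x (mem_of_mem_nhds hs) (hpt x hx)⟩

theorem tendsto_setIntegral_of_tendstoUniformlyOn {X : Type*} [TopologicalSpace X]
    [MeasurableSpace X] [OpensMeasurableSpace X] [l.IsCountablyGenerated] {G : Type*}
    [NormedAddCommGroup G] [NormedSpace ℝ G]
    {μ : Measure X} [IsFiniteMeasureOnCompacts μ] {K : Set X} (hK : IsCompact K)
    (hKm : MeasurableSet K) {f : ι → X → G} {g : X → G} (hf : ∀ᶠ i in l, ContinuousOn (f i) K)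
    (hg : ContinuousOn g K) (h : TendstoUniformlyOn f g l K) :
    Tendsto (fun i ↦ ∫ x in K, f i x ∂μ) l (𝓝 (∫ x in K, g x ∂μ)) := by
  obtain ⟨C, hC⟩ := hK.exists_bound_of_continuousOn hg
  refine tendsto_integral_filter_of_dominated_convergence (fun _ ↦ C + 1) ?_ ?_ ?_ ?_
  · filter_upwards [hf] with i hi using hi.aestronglyMeasurable_of_isCompact hK hKm
  · filter_upwards [Metric.tendstoUniformlyOn_iff.1 h 1 one_pos] with i hi
    filter_upwards [ae_restrict_mem hKm] with x hx
    have := hi x hx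
    rw [dist_comm, dist_eq_norm] at this
    calc ‖f i x‖ ≤ ‖g x‖ + ‖f i x - g x‖ := norm_le_norm_add_norm_sub' _ _
      _ ≤ C + 1 := add_le_add (hC x hx) this.le
  · exact integrableOn_const hK.measure_ne_top
  · filter_upwards [ae_restrict_mem hKm] with x hx using h.tendsto_at hx

end UniformLimits

theorem tendstoLocallyUniformlyOn_nhdsGT_zero {X Y : Type*} [TopologicalSpace X]
    [LocallyCompactSpace X] [SeminormedAddCommGroup Y] {M : Set X} (hM : IsOpen M)
    {f : ℝ → X → Y} {g : X → Y}
    (h : ∀ K : Set X, IsCompact K → K ⊆ M → ∀ ε > (0 : ℝ), ∃ δ > (0 : ℝ), ∀ t : ℝ, 0 < t → t < δ →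
      ∀ x ∈ K, ‖f t x - g x‖ ≤ ε) :
    TendstoLocallyUniformlyOn f g (𝓝[>] 0) M := by
  refine (tendstoLocallyUniformlyOn_iff_forall_isCompact hM).2 fun K hKM hK ↦
    Metric.tendstoUniformlyOn_iff.2 fun ε hε ↦ ?_
  obtain ⟨δ, hδ, hδε⟩ := h K hK hKM (ε / 2) (half_pos hε)
  filter_upwards [Ioo_mem_nhdsGT hδ] with t ht x hx
  rw [dist_comm, dist_eq_norm]
  exact (hδε t ht.1 ht.2 x hx).trans_lt (half_lt_self hε)

theorem tendstoLocallyUniformlyOn_of_iteratedFDeriv_zero {ι 𝕜 E F : Type*} {l : Filter ι}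
    [NontriviallyNormedField 𝕜] [NormedAddCommGroup E] [NormedSpace 𝕜 E] [NormedAddCommGroup F]
    [NormedSpace 𝕜 F] {f : ι → E → F} {g : E → F} {s : Set E}
    (h : TendstoLocallyUniformlyOn (fun i ↦ iteratedFDeriv 𝕜 0 (f i)) (iteratedFDeriv 𝕜 0 g) l s) :
    TendstoLocallyUniformlyOn f g l s :=
  (ContinuousMultilinearMap.apply 𝕜 (fun _ : Fin 0 ↦ E) F
    0).uniformContinuous.comp_tendstoLocallyUniformlyOn h

theorem eqOn_zero_interior_of_setIntegral_eq_zero {X : Type*} [TopologicalSpace X]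
    [MeasurableSpace X] [OpensMeasurableSpace X] {μ : Measure X} [μ.IsOpenPosMeasure]
    [IsFiniteMeasureOnCompacts μ] {K : Set X} (hK : IsCompact K) (hKm : MeasurableSet K)
    {f : X → ℝ} (hf : ContinuousOn f K) (hf₀ : ∀ x ∈ K, 0 ≤ f x)
    (hint : ∫ x in K, f x ∂μ = 0) : EqOn f 0 (interior K) := by
  have hae : f =ᵐ[μ.restrict K] 0 := (setIntegral_eq_zero_iff_of_nonneg_ae
    (ae_restrict_of_forall_mem hKm hf₀) (hf.integrableOn_compact' hK hKm)).1 hint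
  exact Measure.eqOn_open_of_ae_eq (ae_restrict_of_ae_restrict_of_subset interior_subset hae)
    isOpen_interior (hf.mono interior_subset) continuousOn_const

theorem exists_isCompact_of_frontier_notMem {X Y : Type*} [TopologicalSpace X]
    [PseudoMetricSpace Y] {M : Set X} (hM : IsOpen M) (hMc : IsCompact (closure M)) {ψ : X → Y}
    (hψ : ContinuousOn ψ (closure M)) {S : Set Y} (hS : IsClosed S)
    (hψS : ∀ x ∈ frontier M, ψ x ∉ S) :
    ∃ K K', IsCompact K ∧ K ⊆ M ∧ IsClosed K' ∧ K' ⊆ interior K ∧ M ∩ ψ ⁻¹' S ⊆ K' ∧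
      ∃ δ > 0, ∀ x ∈ K \ K', ∀ y, dist (ψ x) y < δ → y ∉ S := by
  have hcpt : IsCompact (ψ '' frontier M) :=
    (hMc.of_isClosed_subset isClosed_frontier frontier_subset_closure).image_of_continuousOn
      (hψ.mono frontier_subset_closure)
  obtain ⟨δ, hδ, hdisj⟩ := Disjoint.exists_cthickenings
    (disjoint_left.2 (forall_mem_image.2 hψS)) hcpt hS
  have hclosed (ρ : ℝ) : IsClosed (closure M ∩ ψ ⁻¹' Metric.cthickening ρ S) :=
    hψ.preimage_isClosed_of_isClosed isClosed_closure Metric.isClosed_cthickening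
  have hsub : closure M ∩ ψ ⁻¹' Metric.cthickening δ S ⊆ M := fun x hx ↦ by
    by_contra hxM
    have hxf : x ∈ frontier M := hM.frontier_eq ▸ ⟨hx.1, hxM⟩
    exact disjoint_left.1 hdisj (Metric.self_subset_cthickening _ (mem_image_of_mem ψ hxf)) hx.2
  refine ⟨_, _, hMc.of_isClosed_subset (hclosed δ) inter_subset_left, hsub, hclosed (δ / 2),
    fun x hx ↦ ?_, fun x hx ↦ ⟨subset_closure hx.1, Metric.self_subset_cthickening _ hx.2⟩,
    δ / 2, half_pos hδ, fun x hx y hy hyS ↦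
      hx.2 ⟨hx.1.1, Metric.mem_cthickening_of_dist_le _ y _ _ hyS hy.le⟩⟩
  have hxM : x ∈ M := hsub ⟨hx.1, Metric.cthickening_mono (half_le_self hδ.le) S hx.2⟩
  have hψx : ContinuousAt ψ x := (hψ.mono subset_closure).continuousAt (hM.mem_nhds hxM)
  have hδx : Metric.thickening δ S ∈ 𝓝 (ψ x) := Metric.isOpen_thickening.mem_nhds
    (Metric.cthickening_subset_thickening' hδ (half_lt_self hδ) S hx.2)
  rw [mem_interior_iff_mem_nhds]
  filter_upwards [hM.mem_nhds hxM, hψx hδx] with y hyM hyS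
  exact ⟨subset_closure hyM, Metric.thickening_subset_cthickening δ S hyS⟩

theorem exists_contDiffBump_forall_pos_mul {g : ℝ → ℝ} (hg : Continuous g) {c : ℝ} (hc : g c ≠ 0)
    {U : Set ℝ} (hU : U ∈ 𝓝 c) :
    ∃ f : ContDiffBump c, tsupport f ⊆ U ∧ ∀ t ∈ tsupport f, 0 < g c * g t := by
  have hpos : ∀ᶠ t in 𝓝 c, 0 < g c * g t :=
    (continuous_const.mul hg).continuousAt.eventually_const_lt (mul_self_pos.2 hc)
  obtain ⟨r, hr, hrU⟩ := Metric.nhds_basis_closedBall.mem_iff.1 (inter_mem hU hpos)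
  refine ⟨⟨r / 2, r, half_pos hr, half_lt_self hr⟩, ?_, fun t ht ↦ ?_⟩
  · rw [ContDiffBump.tsupport_eq]
    exact fun t ht ↦ (hrU ht).1
  · rw [ContDiffBump.tsupport_eq] at ht
    exact (hrU ht).2

theorem deriv_eq_zero_of_eqOn_const {𝕜 F : Type*} [NontriviallyNormedField 𝕜]
    [NormedAddCommGroup F] [NormedSpace 𝕜 F] {f : 𝕜 → F} {s : Set 𝕜} (hs : IsPreconnected s)
    (hs' : s.Nontrivial) {c : F} (h : EqOn f (fun _ ↦ c) s) {x : 𝕜} (hx : x ∈ s)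
    (hf : DifferentiableAt 𝕜 f x) : deriv f x = 0 := by
  rw [← hf.derivWithin (hs.preperfect_of_nontrivial hs' x hx).uniqueDiffWithinAt,
    derivWithin_congr h (h hx), derivWithin_fun_const, Pi.zero_apply]

section PartialDerivatives

variable {f g : ℝ × ℝ → ℝ} {x : ℝ × ℝ}

theorem pd1_eq_fderiv (hf : DifferentiableAt ℝ f x) : pd1 f x = fderiv ℝ f x (1, 0) :=
  (hf.hasFDerivAt.comp_hasDerivAt (f := fun a ↦ (a, x.2)) x.1
    ((hasDerivAt_id x.1).prodMk (hasDerivAt_const x.1 x.2))).deriv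

theorem pd2_eq_fderiv (hf : DifferentiableAt ℝ f x) : pd2 f x = fderiv ℝ f x (0, 1) :=
  (hf.hasFDerivAt.comp_hasDerivAt (f := fun a ↦ (x.1, a)) x.2
    ((hasDerivAt_const x.2 x.1).prodMk (hasDerivAt_id x.2))).deriv

theorem fderiv_eq_pd (hf : DifferentiableAt ℝ f x) (a : ℝ × ℝ) :
    fderiv ℝ f x a = a.1 * pd1 f x + a.2 * pd2 f x := by
  have ha : a = a.1 • ((1 : ℝ), (0 : ℝ)) + a.2 • ((0 : ℝ), (1 : ℝ)) := by ext <;> simp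
  conv_lhs => rw [ha]
  rw [map_add, map_smul, map_smul, pd1_eq_fderiv hf, pd2_eq_fderiv hf, smul_eq_mul, smul_eq_mul]

theorem fderiv_eq_zero_iff_pd (hf : DifferentiableAt ℝ f x) :
    fderiv ℝ f x = 0 ↔ pd1 f x = 0 ∧ pd2 f x = 0 := by
  refine ⟨fun h ↦ ?_, fun h ↦ ContinuousLinearMap.ext fun a ↦ ?_⟩
  · simp [pd1_eq_fderiv hf, pd2_eq_fderiv hf, h]
  · simp [fderiv_eq_pd hf, h]

theorem pd1_neg : pd1 (fun y ↦ -f y) x = -pd1 f x := deriv.fun_neg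

theorem pd2_neg : pd2 (fun y ↦ -f y) x = -pd2 f x := deriv.fun_neg

theorem eventuallyEq_pd1 (hf : ContDiffAt ℝ 1 f x) :
    pd1 f =ᶠ[𝓝 x] fun y ↦ fderiv ℝ f y (1, 0) := by
  filter_upwards [hf.eventually (by simp)] with y hy
  exact pd1_eq_fderiv (hy.differentiableAt one_ne_zero)

theorem eventuallyEq_pd2 (hf : ContDiffAt ℝ 1 f x) :
    pd2 f =ᶠ[𝓝 x] fun y ↦ fderiv ℝ f y (0, 1) := by
  filter_upwards [hf.eventually (by simp)] with y hy
  exact pd2_eq_fderiv (hy.differentiableAt one_ne_zero)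

theorem contDiffAt_pd1 {n : ℕ} (hf : ContDiffAt ℝ (n + 1) f x) : ContDiffAt ℝ n (pd1 f) x :=
  ((hf.fderiv_right le_rfl).clm_apply contDiffAt_const).congr_of_eventuallyEq
    (eventuallyEq_pd1 (hf.of_le le_add_self))

theorem contDiffAt_pd2 {n : ℕ} (hf : ContDiffAt ℝ (n + 1) f x) : ContDiffAt ℝ n (pd2 f) x :=
  ((hf.fderiv_right le_rfl).clm_apply contDiffAt_const).congr_of_eventuallyEq
    (eventuallyEq_pd2 (hf.of_le le_add_self))

theorem fderiv_fderiv_apply {E F : Type*} [NormedAddCommGroup E] [NormedSpace ℝ E]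
    [NormedAddCommGroup F] [NormedSpace ℝ F] {f : E → F} {x : E} (hf : ContDiffAt ℝ 2 f x)
    (a b : E) : fderiv ℝ (fun y ↦ fderiv ℝ f y a) x b = iteratedFDeriv ℝ 2 f x ![b, a] := by
  have hd : DifferentiableAt ℝ (fderiv ℝ f) x :=
    (hf.fderiv_right (m := 1) (by norm_num)).differentiableAt one_ne_zero
  rw [fderiv_clm_apply hd (differentiableAt_const a)]
  simp [iteratedFDeriv_two_apply]

theorem pd1_pd1_eq_iteratedFDeriv (hf : ContDiffAt ℝ 2 f x) :
    pd1 (pd1 f) x = iteratedFDeriv ℝ 2 f x ![(1, 0), (1, 0)] := by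
  rw [pd1_eq_fderiv ((contDiffAt_pd1 (n := 1) hf).differentiableAt one_ne_zero),
    (eventuallyEq_pd1 (hf.of_le one_le_two)).fderiv_eq, fderiv_fderiv_apply hf]

theorem pd2_pd2_eq_iteratedFDeriv (hf : ContDiffAt ℝ 2 f x) :
    pd2 (pd2 f) x = iteratedFDeriv ℝ 2 f x ![(0, 1), (0, 1)] := by
  rw [pd2_eq_fderiv ((contDiffAt_pd2 (n := 1) hf).differentiableAt one_ne_zero),
    (eventuallyEq_pd2 (hf.of_le one_le_two)).fderiv_eq, fderiv_fderiv_apply hf]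

theorem pd1_pd2_comm (hf : ContDiffAt ℝ 2 f x) : pd1 (pd2 f) x = pd2 (pd1 f) x := by
  rw [pd1_eq_fderiv ((contDiffAt_pd2 (n := 1) hf).differentiableAt one_ne_zero),
    pd2_eq_fderiv ((contDiffAt_pd1 (n := 1) hf).differentiableAt one_ne_zero),
    (eventuallyEq_pd1 (hf.of_le one_le_two)).fderiv_eq,
    (eventuallyEq_pd2 (hf.of_le one_le_two)).fderiv_eq, fderiv_fderiv_apply hf,
    fderiv_fderiv_apply hf, (hf.isSymmSndFDerivAt (by simp)).iteratedFDeriv_cons]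

theorem pd1_congr (h : f =ᶠ[𝓝 x] g) : pd1 f x = pd1 g x :=
  EventuallyEq.deriv_eq <| h.comp_tendsto <|
    Continuous.tendsto (f := fun a ↦ (a, x.2)) (by fun_prop) x.1

theorem pd2_congr (h : f =ᶠ[𝓝 x] g) : pd2 f x = pd2 g x :=
  EventuallyEq.deriv_eq <| h.comp_tendsto <|
    Continuous.tendsto (f := fun a ↦ (x.1, a)) (by fun_prop) x.2

theorem pd1_add (hf : DifferentiableAt ℝ f x) (hg : DifferentiableAt ℝ g x) :
    pd1 (fun y ↦ f y + g y) x = pd1 f x + pd1 g x := by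
  rw [pd1_eq_fderiv (hf.fun_add hg), fderiv_fun_add hf hg, pd1_eq_fderiv hf, pd1_eq_fderiv hg]
  rfl

theorem pd2_add (hf : DifferentiableAt ℝ f x) (hg : DifferentiableAt ℝ g x) :
    pd2 (fun y ↦ f y + g y) x = pd2 f x + pd2 g x := by
  rw [pd2_eq_fderiv (hf.fun_add hg), fderiv_fun_add hf hg, pd2_eq_fderiv hf, pd2_eq_fderiv hg]
  rfl

theorem pd1_mul (hf : DifferentiableAt ℝ f x) (hg : DifferentiableAt ℝ g x) :
    pd1 (fun y ↦ f y * g y) x = f x * pd1 g x + g x * pd1 f x := by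
  rw [pd1_eq_fderiv (hf.fun_mul hg), fderiv_fun_mul hf hg, pd1_eq_fderiv hf, pd1_eq_fderiv hg]
  rfl

theorem pd2_mul (hf : DifferentiableAt ℝ f x) (hg : DifferentiableAt ℝ g x) :
    pd2 (fun y ↦ f y * g y) x = f x * pd2 g x + g x * pd2 f x := by
  rw [pd2_eq_fderiv (hf.fun_mul hg), fderiv_fun_mul hf hg, pd2_eq_fderiv hf, pd2_eq_fderiv hg]
  rfl

theorem contDiffAt_lap (hf : ContDiffAt ℝ 3 f x) : ContDiffAt ℝ 1 (lap f) x :=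
  (contDiffAt_pd1 (n := 1) (contDiffAt_pd1 (n := 2) hf)).add
    (contDiffAt_pd2 (n := 1) (contDiffAt_pd2 (n := 2) hf))

theorem lap_neg : lap (fun y ↦ -f y) x = -lap f x := by
  have h₁ : pd1 (fun y ↦ -f y) = fun y ↦ -pd1 f y := funext fun _ ↦ pd1_neg
  have h₂ : pd2 (fun y ↦ -f y) = fun y ↦ -pd2 f y := funext fun _ ↦ pd2_neg
  rw [lap, lap, h₁, h₂, pd1_neg, pd2_neg, neg_add]

theorem lap_pd1 (hf : ContDiffAt ℝ 3 f x) : lap (pd1 f) x = pd1 (lap f) x := by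
  have hcomm : pd2 (pd1 f) =ᶠ[𝓝 x] pd1 (pd2 f) := by
    filter_upwards [hf.eventually (by simp)] with y hy
    exact (pd1_pd2_comm (hy.of_le (by norm_num))).symm
  have h₁ := contDiffAt_pd1 (n := 2) hf
  have h₂ := contDiffAt_pd2 (n := 2) hf
  calc lap (pd1 f) x = pd1 (pd1 (pd1 f)) x + pd2 (pd2 (pd1 f)) x := rfl
    _ = pd1 (pd1 (pd1 f)) x + pd1 (pd2 (pd2 f)) x := by
      rw [pd2_congr hcomm, pd1_pd2_comm h₂]
    _ = pd1 (lap f) x :=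
      (pd1_add ((contDiffAt_pd1 (n := 1) h₁).differentiableAt one_ne_zero)
        ((contDiffAt_pd2 (n := 1) h₂).differentiableAt one_ne_zero)).symm

theorem lap_pd2 (hf : ContDiffAt ℝ 3 f x) : lap (pd2 f) x = pd2 (lap f) x := by
  have hcomm : pd1 (pd2 f) =ᶠ[𝓝 x] pd2 (pd1 f) := by
    filter_upwards [hf.eventually (by simp)] with y hy
    exact pd1_pd2_comm (hy.of_le (by norm_num))
  have h₁ := contDiffAt_pd1 (n := 2) hf
  have h₂ := contDiffAt_pd2 (n := 2) hf
  calc lap (pd2 f) x = pd1 (pd1 (pd2 f)) x + pd2 (pd2 (pd2 f)) x := rfl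
    _ = pd2 (pd1 (pd1 f)) x + pd2 (pd2 (pd2 f)) x := by
      rw [pd1_congr hcomm, pd1_pd2_comm h₁]
    _ = pd2 (lap f) x :=
      (pd2_add ((contDiffAt_pd1 (n := 1) h₁).differentiableAt one_ne_zero)
        ((contDiffAt_pd2 (n := 1) h₂).differentiableAt one_ne_zero)).symm

end PartialDerivatives

section PlanarFields

variable {v : ℝ × ℝ → ℝ × ℝ} {ψ : ℝ × ℝ → ℝ} {x : ℝ × ℝ}

/-- The velocity field `∇^⊥ψ` of the stream function `ψ`. -/
noncomputable def perpGrad (ψ : ℝ × ℝ → ℝ) (x : ℝ × ℝ) : ℝ × ℝ := (-(pd2 ψ x), pd1 ψ x)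

/-- The divergence of a planar vector field. -/
noncomputable def divergence (v : ℝ × ℝ → ℝ × ℝ) (x : ℝ × ℝ) : ℝ :=
  pd1 (fun y ↦ (v y).1) x + pd2 (fun y ↦ (v y).2) x

/-- The flux form `v₂ dx₁ - v₁ dx₂` of a vector `v`; a stream function of a vector field is a
primitive of its flux form. -/
noncomputable def fluxForm : ℝ × ℝ →L[ℝ] ℝ × ℝ →L[ℝ] ℝ :=
  (ContinuousLinearMap.snd ℝ ℝ ℝ).smulRight (ContinuousLinearMap.fst ℝ ℝ ℝ) -
    (ContinuousLinearMap.fst ℝ ℝ ℝ).smulRight (ContinuousLinearMap.snd ℝ ℝ ℝ)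

/-- The trace of a vector-valued bilinear form on the plane: it sends the second derivative of a
map to its componentwise Laplacian. -/
noncomputable def bilinTrace {F : Type*} [NormedAddCommGroup F] [NormedSpace ℝ F] :
    ContinuousMultilinearMap ℝ (fun _ : Fin 2 ↦ ℝ × ℝ) F →L[ℝ] F :=
  ContinuousMultilinearMap.apply ℝ (fun _ : Fin 2 ↦ ℝ × ℝ) F ![(1, 0), (1, 0)] +
    ContinuousMultilinearMap.apply ℝ (fun _ : Fin 2 ↦ ℝ × ℝ) F ![(0, 1), (0, 1)]

/-- The componentwise Laplacian `Δv` of a vector field, defined through its second derivative. -/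
noncomputable def vecLap (v : ℝ × ℝ → ℝ × ℝ) (x : ℝ × ℝ) : ℝ × ℝ :=
  bilinTrace (iteratedFDeriv ℝ 2 v x)

/-- The density `v · Δv` of the work done on the flow `v` by unit viscosity. -/
noncomputable def viscousPower (v : ℝ × ℝ → ℝ × ℝ) (x : ℝ × ℝ) : ℝ :=
  (v x).1 * (vecLap v x).1 + (v x).2 * (vecLap v x).2

theorem fluxForm_apply (a b : ℝ × ℝ) : fluxForm a b = a.2 * b.1 - a.1 * b.2 := by
  simp [fluxForm]

theorem fluxForm_self (a : ℝ × ℝ) : fluxForm a a = 0 := by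
  rw [fluxForm_apply]; ring

theorem fderiv_eq_fluxForm_perpGrad (hψ : DifferentiableAt ℝ ψ x) :
    fderiv ℝ ψ x = fluxForm (perpGrad ψ x) := by
  ext <;> simp [fderiv_eq_pd hψ, fluxForm_apply, perpGrad]

theorem contDiffAt_perpGrad {n : ℕ} (hψ : ContDiffAt ℝ (n + 1) ψ x) :
    ContDiffAt ℝ n (perpGrad ψ) x :=
  (contDiffAt_pd2 hψ).neg.prodMk (contDiffAt_pd1 hψ)

theorem lap_eq_bilinTrace {f : ℝ × ℝ → ℝ} (hf : ContDiffAt ℝ 2 f x) :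
    lap f x = bilinTrace (iteratedFDeriv ℝ 2 f x) := by
  rw [lap, pd1_pd1_eq_iteratedFDeriv hf, pd2_pd2_eq_iteratedFDeriv hf]
  rfl

theorem lap_clm_comp (hv : ContDiffAt ℝ 2 v x) (L : ℝ × ℝ →L[ℝ] ℝ) :
    lap (fun y ↦ L (v y)) x = L (vecLap v x) := by
  change lap (L ∘ v) x = _
  rw [lap_eq_bilinTrace (L.contDiff.contDiffAt.comp x hv), L.iteratedFDeriv_comp_left hv le_rfl]
  simp [vecLap, bilinTrace]

theorem vecLap_eq (hv : ContDiffAt ℝ 2 v x) :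
    vecLap v x = (lap (fun y ↦ (v y).1) x, lap (fun y ↦ (v y).2) x) :=
  Prod.ext (lap_clm_comp hv (.fst ℝ ℝ ℝ)).symm (lap_clm_comp hv (.snd ℝ ℝ ℝ)).symm

theorem viscousPower_perpGrad (hψ : ContDiffAt ℝ 3 ψ x) :
    viscousPower (perpGrad ψ) x = pd1 ψ x * pd1 (lap ψ) x + pd2 ψ x * pd2 (lap ψ) x := by
  rw [viscousPower, vecLap_eq (contDiffAt_perpGrad (n := 2) hψ)]
  simp only [perpGrad]
  rw [lap_neg, lap_pd2 hψ, lap_pd1 hψ]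
  ring

theorem fderiv_lap_of_lap_eq_comp {F : ℝ → ℝ} (hψ : DifferentiableAt ℝ ψ x)
    (hF : DifferentiableAt ℝ F (ψ x)) (hFψ : lap ψ =ᶠ[𝓝 x] F ∘ ψ) :
    fderiv ℝ (lap ψ) x = deriv F (ψ x) • fderiv ℝ ψ x := by
  rw [hFψ.fderiv_eq, (hF.hasDerivAt.comp_hasFDerivAt x hψ.hasFDerivAt).fderiv]

theorem viscousPower_perpGrad_of_lap_eq_comp {F : ℝ → ℝ} (hψ : ContDiffAt ℝ 3 ψ x)
    (hF : DifferentiableAt ℝ F (ψ x)) (hFψ : lap ψ =ᶠ[𝓝 x] F ∘ ψ) :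
    viscousPower (perpGrad ψ) x = deriv F (ψ x) * (pd1 ψ x ^ 2 + pd2 ψ x ^ 2) := by
  have hψx := hψ.differentiableAt three_ne_zero
  have hlap := (contDiffAt_lap hψ).differentiableAt one_ne_zero
  rw [viscousPower_perpGrad hψ, ← fderiv_eq_pd hlap (pd1 ψ x, pd2 ψ x),
    fderiv_lap_of_lap_eq_comp hψx hF hFψ, smul_apply, fderiv_eq_pd hψx, smul_eq_mul]
  ring

/-- Where `fderiv ℝ (lap ψ)` does not vanish, `ψ` is an open map, so it takes values off `S`. -/
theorem fderiv_lap_eq_zero_of_interior_eq_empty {M : Set (ℝ × ℝ)} (hM : IsOpen M)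
    (hψ : ContDiffOn ℝ 3 ψ M) {F : ℝ → ℝ} (hF : Differentiable ℝ F)
    (hFψ : EqOn (lap ψ) (F ∘ ψ) M) {S : Set ℝ} (hS : interior S = ∅)
    (hzero : ∀ x ∈ M, ψ x ∉ S → fderiv ℝ (lap ψ) x = 0) :
    ∀ x ∈ M, fderiv ℝ (lap ψ) x = 0 := by
  intro x hx
  by_contra hne
  have hxM : M ∈ 𝓝 x := hM.mem_nhds hx
  have hψx := hψ.contDiffAt hxM
  have hψ' : fderiv ℝ ψ x ≠ 0 := by
    intro h
    rw [fderiv_lap_of_lap_eq_comp (hψx.differentiableAt three_ne_zero) (hF _)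
      (hFψ.eventuallyEq_of_mem hxM), h, smul_zero] at hne
    exact hne rfl
  have hopen : map ψ (𝓝 x) = 𝓝 (ψ x) :=
    (hψx.hasStrictFDerivAt three_ne_zero).map_nhds_eq_of_surj
      (LinearMap.range_eq_top.2 (LinearMap.surjective fun h ↦
        hψ' (ContinuousLinearMap.coe_injective h)))
  have hSx : ∀ᶠ y in 𝓝 x, ψ y ∈ S := by
    filter_upwards [hxM, ((contDiffAt_lap hψx).continuousAt_fderiv one_ne_zero).eventually_ne hne]
      with y hy hy'
    by_contra hyS
    exact hy' (hzero y hy hyS)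
  have hxS : ψ x ∈ interior S := mem_interior_iff_mem_nhds.2 (hopen ▸ hSx)
  rwa [hS] at hxS

end PlanarFields

section DivergenceTheorem

theorem contDiff_of_forall_mem_tsupport {E F : Type*} [NormedAddCommGroup E] [NormedSpace ℝ E]
    [NormedAddCommGroup F] [NormedSpace ℝ F] {n : ℕ} {f : E → F}
    (hf : ∀ x ∈ tsupport f, ContDiffAt ℝ n f x) : ContDiff ℝ n f :=
  contMDiff_iff_contDiff.1 (contMDiff_of_tsupport fun x hx ↦ (hf x hx).contMDiffAt)

theorem integral_fderiv_apply_eq_zero {E F : Type*} [NormedAddCommGroup E] [NormedSpace ℝ E]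
    [FiniteDimensional ℝ E] [MeasurableSpace E] [BorelSpace E] {μ : Measure E} [μ.IsAddHaarMeasure]
    [NormedAddCommGroup F] [NormedSpace ℝ F] {f : E → F} (hf : ContDiff ℝ 1 f)
    (hfc : HasCompactSupport f) (a : E) :
    Integrable (fun x ↦ fderiv ℝ f x a) μ ∧ ∫ x, fderiv ℝ f x a ∂μ = 0 := by
  have hint : Integrable (fun x ↦ fderiv ℝ f x a) μ :=
    ((hf.continuous_fderiv one_ne_zero).clm_apply continuous_const).integrable_of_hasCompactSupport
      (hfc.fderiv_apply ℝ a)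
  have hparts := integral_smul_fderiv_eq_neg_fderiv_smul_of_integrable (μ := μ)
    (f := fun _ : E ↦ (1 : ℝ)) (g := f) (v := a) (by simp) (by simpa using hint)
    (by simpa using hf.continuous.integrable_of_hasCompactSupport hfc)
    (fun _ _ ↦ differentiableAt_const _) fun x _ ↦ hf.differentiable one_ne_zero x
  exact ⟨hint, by simpa using hparts⟩

variable {v : ℝ × ℝ → ℝ × ℝ} {f : ℝ × ℝ → ℝ}

theorem integral_divergence_eq_zero (hv : ContDiff ℝ 1 v) (hvc : HasCompactSupport v) :
    ∫ x, divergence v x = 0 := by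
  have h₁ := integral_fderiv_apply_eq_zero (μ := volume) (contDiff_fst.comp hv)
    (hvc.comp_left (g := Prod.fst) rfl) (1, 0)
  have h₂ := integral_fderiv_apply_eq_zero (μ := volume) (contDiff_snd.comp hv)
    (hvc.comp_left (g := Prod.snd) rfl) (0, 1)
  calc ∫ x, divergence v x
      = ∫ x, (fderiv ℝ (Prod.fst ∘ v) x (1, 0) + fderiv ℝ (Prod.snd ∘ v) x (0, 1)) := by
        refine integral_congr_ae (.of_forall fun x ↦ ?_)
        have hvx := hv.differentiable one_ne_zero x
        exact congrArg₂ (· + ·) (pd1_eq_fderiv hvx.fst) (pd2_eq_fderiv hvx.snd)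
    _ = 0 := by rw [integral_add h₁.1 h₂.1, h₁.2, h₂.2, add_zero]

theorem divergence_smul {x : ℝ × ℝ} (hf : DifferentiableAt ℝ f x) (hv : DifferentiableAt ℝ v x) :
    divergence (fun y ↦ f y • v y) x = fderiv ℝ f x (v x) + f x * divergence v x := by
  simp only [divergence, Prod.smul_fst, Prod.smul_snd, smul_eq_mul]
  rw [pd1_mul hf hv.fst, pd2_mul hf hv.snd, fderiv_eq_pd hf]
  ring

theorem divergence_eq_zero_of_notMem_tsupport {x : ℝ × ℝ} (hx : x ∉ tsupport v) :
    divergence v x = 0 := by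
  have hzero : v =ᶠ[𝓝 x] 0 := notMem_tsupport_iff_eventuallyEq.1 hx
  have h₁ : (fun y ↦ (v y).1) =ᶠ[𝓝 x] fun _ ↦ 0 := hzero.fun_comp Prod.fst
  have h₂ : (fun y ↦ (v y).2) =ᶠ[𝓝 x] fun _ ↦ 0 := hzero.fun_comp Prod.snd
  rw [divergence, pd1_congr h₁, pd2_congr h₂]
  simp [pd1, pd2]

theorem integral_fderiv_apply_field_eq_zero (hf : ContDiff ℝ 1 f) (hfc : HasCompactSupport f)
    (hv : ∀ x ∈ tsupport f, ContDiffAt ℝ 1 v x) (hdiv : ∀ x ∈ tsupport f, divergence v x = 0) :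
    ∫ x, fderiv ℝ f x (v x) = 0 := by
  have hsub : tsupport (fun y ↦ f y • v y) ⊆ tsupport f := tsupport_smul_subset_left f v
  rw [← integral_divergence_eq_zero (v := fun y ↦ f y • v y)
    (contDiff_of_forall_mem_tsupport (n := 1) fun x hx ↦ hf.contDiffAt.smul (hv x (hsub hx)))
    hfc.smul_right]
  refine integral_congr_ae (.of_forall fun x ↦ ?_)
  by_cases hx : x ∈ tsupport f
  · simp only [divergence_smul (hf.differentiable one_ne_zero x)
      ((hv x hx).differentiableAt one_ne_zero), hdiv x hx, mul_zero, add_zero]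
  · simp only [divergence_eq_zero_of_notMem_tsupport fun h ↦ hx (hsub h),
      fderiv_of_notMem_tsupport ℝ hx, zero_apply]

end DivergenceTheorem

/-- The velocity `v` and the pressure `p` solve `v · ∇v = -∇p + ν Δv`, `div v = 0` classically
in `M`. -/
structure IsSteadyNavierStokes (ν : ℝ) (M : Set (ℝ × ℝ)) (v : ℝ × ℝ → ℝ × ℝ) (p : ℝ × ℝ → ℝ) :
    Prop where
  contDiffOn_velocity : ContDiffOn ℝ 2 v M
  contDiffOn_pressure : ContDiffOn ℝ 1 p M
  momentum_fst : ∀ x ∈ M,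
    (v x).1 * pd1 (fun y ↦ (v y).1) x + (v x).2 * pd2 (fun y ↦ (v y).1) x
      = -pd1 p x + ν * lap (fun y ↦ (v y).1) x
  momentum_snd : ∀ x ∈ M,
    (v x).1 * pd1 (fun y ↦ (v y).2) x + (v x).2 * pd2 (fun y ↦ (v y).2) x
      = -pd2 p x + ν * lap (fun y ↦ (v y).2) x
  divergence_eq_zero : ∀ x ∈ M, divergence v x = 0

/-- The total head `p + |v|² / 2` of Bernoulli's principle. -/
noncomputable def bernoulliHead (v : ℝ × ℝ → ℝ × ℝ) (p : ℝ × ℝ → ℝ) (x : ℝ × ℝ) : ℝ :=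
  p x + ((v x).1 ^ 2 + (v x).2 ^ 2) / 2

namespace IsSteadyNavierStokes

variable {ν : ℝ} {M : Set (ℝ × ℝ)} {v : ℝ × ℝ → ℝ × ℝ} {p : ℝ × ℝ → ℝ} {x : ℝ × ℝ}

theorem contDiffAt_bernoulliHead (h : IsSteadyNavierStokes ν M v p) (hM : IsOpen M) (hx : x ∈ M) :
    ContDiffAt ℝ 1 (bernoulliHead v p) x := by
  have hv := (h.contDiffOn_velocity.contDiffAt (hM.mem_nhds hx)).of_le one_le_two
  exact (h.contDiffOn_pressure.contDiffAt (hM.mem_nhds hx)).add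
    (((hv.fst.pow 2).add (hv.snd.pow 2)).div_const 2)

theorem fderiv_bernoulliHead_apply_velocity (h : IsSteadyNavierStokes ν M v p) (hM : IsOpen M)
    (hx : x ∈ M) : fderiv ℝ (bernoulliHead v p) x (v x) = ν * viscousPower v x := by
  have hv := h.contDiffOn_velocity.contDiffAt (hM.mem_nhds hx)
  have hvx := hv.differentiableAt two_ne_zero
  have hp := (h.contDiffOn_pressure.contDiffAt (hM.mem_nhds hx)).differentiableAt one_ne_zero
  have hB : HasFDerivAt (bernoulliHead v p) _ x := hp.hasFDerivAt.add
    (((hvx.fst.hasFDerivAt.pow 2).add (hvx.snd.hasFDerivAt.pow 2)).mul_const 2⁻¹)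
  rw [hB.fderiv, viscousPower, vecLap_eq hv]
  simp only [add_apply, smul_apply, smul_eq_mul, nsmul_eq_mul, smul_add, Nat.add_one_sub_one,
    pow_one, Nat.cast_ofNat, fderiv_eq_pd hp, fderiv_eq_pd hvx.fst, fderiv_eq_pd hvx.snd]
  linear_combination (v x).1 * h.momentum_fst x hx + (v x).2 * h.momentum_snd x hx

/-- Multiplying by the Bernoulli head turns a cutoff transported by the flow into an exact
identity in which the viscosity factors out. -/
theorem integral_mul_viscousPower_eq_zero (h : IsSteadyNavierStokes ν M v p) (hM : IsOpen M)
    (hν : ν ≠ 0) {φ : ℝ × ℝ → ℝ} (hφc : HasCompactSupport φ) (hφM : tsupport φ ⊆ M)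
    (hφ : ∀ x ∈ tsupport φ, ContDiffAt ℝ 1 φ x)
    (hφv : ∀ x ∈ tsupport φ, fderiv ℝ φ x (v x) = 0) :
    ∫ x, φ x * viscousPower v x = 0 := by
  set B := bernoulliHead v p
  have hB : ∀ x ∈ tsupport φ, ContDiffAt ℝ 1 B x := fun x hx ↦
    h.contDiffAt_bernoulliHead hM (hφM hx)
  have hsub : tsupport (fun y ↦ φ y * B y) ⊆ tsupport φ := tsupport_mul_subset_left
  have hderiv (x) : fderiv ℝ (fun y ↦ φ y * B y) x (v x) = ν * (φ x * viscousPower v x) := by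
    by_cases hx : x ∈ tsupport φ
    · have hBx : fderiv ℝ B x (v x) = ν * viscousPower v x :=
        h.fderiv_bernoulliHead_apply_velocity hM (hφM hx)
      rw [fderiv_fun_mul ((hφ x hx).differentiableAt one_ne_zero)
        ((hB x hx).differentiableAt one_ne_zero)]
      simp only [add_apply, smul_apply, smul_eq_mul, hφv x hx, hBx]
      ring
    · rw [fderiv_of_notMem_tsupport ℝ fun hx' ↦ hx (hsub hx'),
        image_eq_zero_of_notMem_tsupport hx]
      simp
  have hzero : ∫ x, ν * (φ x * viscousPower v x) = 0 := by
    rw [← integral_fderiv_apply_field_eq_zero (v := v)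
      (contDiff_of_forall_mem_tsupport (n := 1) fun x hx ↦ (hφ x (hsub hx)).mul (hB x (hsub hx)))
      hφc.mul_right
      (fun x hx ↦ (h.contDiffOn_velocity.contDiffAt
        (hM.mem_nhds (hφM (hsub hx)))).of_le one_le_two)
      fun x hx ↦ h.divergence_eq_zero x (hφM (hsub hx))]
    simp only [hderiv]
  rw [integral_const_mul] at hzero
  exact (mul_eq_zero.1 hzero).resolve_left hν

theorem setIntegral_comp_mul_viscousPower_eq_zero (h : IsSteadyNavierStokes ν M v p)
    (hM : IsOpen M) (hν : ν ≠ 0) {g : ℝ × ℝ → ℝ}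
    (hg : ∀ x ∈ M, HasFDerivAt g (fluxForm (v x)) x) {η : ℝ → ℝ} (hη : ContDiff ℝ 1 η)
    {K K' : Set (ℝ × ℝ)} (hK : IsCompact K) (hKM : K ⊆ M) (hK' : IsClosed K')
    (hK'K : K' ⊆ interior K) (hηg : ∀ x ∈ K \ K', η (g x) = 0) :
    ∫ x in K, η (g x) * viscousPower v x = 0 := by
  set φ : ℝ × ℝ → ℝ := K.indicator (η ∘ g) with hφ
  have hsupp : tsupport φ ⊆ K' := by
    refine closure_minimal (fun x hx ↦ ?_) hK'
    by_contra hxK'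
    have hxK : x ∈ K := mem_of_indicator_ne_zero hx
    exact hx (by rw [hφ, indicator_of_mem hxK]; exact hηg x ⟨hxK, hxK'⟩)
  have hloc : ∀ x ∈ tsupport φ, x ∈ M ∧ φ =ᶠ[𝓝 x] η ∘ g := fun x hx ↦
    have hxK := hK'K (hsupp hx)
    ⟨hKM (interior_subset hxK),
      (eqOn_indicator (s := K)).eventuallyEq_of_mem (mem_interior_iff_mem_nhds.1 hxK)⟩
  rw [← integral_indicator hK.measurableSet]
  simp only [indicator_mul_left]
  change ∫ x, φ x * viscousPower v x = 0
  refine h.integral_mul_viscousPower_eq_zero hM hν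
    (HasCompactSupport.intro hK fun _ hx ↦ indicator_of_notMem hx _) (fun x hx ↦ (hloc x hx).1)
    (fun x hx ↦ ?_) fun x hx ↦ ?_
  · have hgx : ContDiffAt ℝ 1 g x := contDiffAt_one_iff.2 ⟨_, M, hM.mem_nhds (hloc x hx).1,
      fluxForm.continuous.comp_continuousOn h.contDiffOn_velocity.continuousOn, hg⟩
    exact (hη.contDiffAt.comp x hgx).congr_of_eventuallyEq (hloc x hx).2
  · have hcomp : HasFDerivAt (η ∘ g) (deriv η (g x) • fluxForm (v x)) x :=
      (hη.differentiable one_ne_zero (g x)).hasDerivAt.comp_hasFDerivAt x (hg x (hloc x hx).1)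
    rw [(hloc x hx).2.fderiv_eq, hcomp.fderiv, smul_apply, fluxForm_self, smul_zero]

end IsSteadyNavierStokes

theorem exists_streamFunction {M : Set (ℝ × ℝ)} [SimplyConnectedSpace M] (hM : IsOpen M)
    {v : ℝ × ℝ → ℝ × ℝ} (hv : DifferentiableOn ℝ v M) (hdiv : ∀ x ∈ M, divergence v x = 0)
    (x₀ : ℝ × ℝ) (c : ℝ) :
    ∃ g : ℝ × ℝ → ℝ, g x₀ = c ∧ ∀ x ∈ M, HasFDerivAt g (fluxForm (v x)) x := by
  have hcomp : ∀ x ∈ M, HasFDerivAt (fun y ↦ fluxForm (v y)) (fluxForm ∘L fderiv ℝ v x) x :=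
    fun x hx ↦ fluxForm.hasFDerivAt.comp x (hv.differentiableAt (hM.mem_nhds hx)).hasFDerivAt
  obtain ⟨g, hg⟩ := exists_hasFDerivAt_of_fderiv_symmetric hM
    (fun x hx ↦ (hcomp x hx).differentiableAt.differentiableWithinAt) fun x hx a b ↦ by
      have hvx := hv.differentiableAt (hM.mem_nhds hx)
      have hpd (a : ℝ × ℝ) : fderiv ℝ v x a =
          (a.1 * pd1 (fun y ↦ (v y).1) x + a.2 * pd2 (fun y ↦ (v y).1) x,
            a.1 * pd1 (fun y ↦ (v y).2) x + a.2 * pd2 (fun y ↦ (v y).2) x) := by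
        rw [← fderiv_eq_pd hvx.fst, ← fderiv_eq_pd hvx.snd, hvx.hasFDerivAt.fst.fderiv,
          hvx.hasFDerivAt.snd.fderiv]
        rfl
      have hx0 : pd1 (fun y ↦ (v y).1) x + pd2 (fun y ↦ (v y).2) x = 0 := hdiv x hx
      simp only [(hcomp x hx).fderiv, ContinuousLinearMap.comp_apply, fluxForm_apply, hpd]
      linear_combination (a.2 * b.1 - a.1 * b.2) * hx0
  exact ⟨fun x ↦ g x + (c - g x₀), by ring, fun x hx ↦ (hg x hx).add_const _⟩

section InviscidLimit

variable {ι : Type*} {l : Filter ι} {M : Set (ℝ × ℝ)} {u : ι → ℝ × ℝ → ℝ × ℝ}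
  {p : ι → ℝ × ℝ → ℝ} {ν : ι → ℝ} {v : ℝ × ℝ → ℝ × ℝ} {ψ : ℝ × ℝ → ℝ}

theorem continuousOn_vecLap (hM : IsOpen M) (hv : ContDiffOn ℝ 2 v M) :
    ContinuousOn (vecLap v) M := fun x hx ↦
  ((bilinTrace (F := ℝ × ℝ)).continuous.continuousAt.comp
    ((hv.contDiffAt (hM.mem_nhds hx)).iteratedFDeriv_right (m := 0) (i := 2)
      (by norm_num)).continuousAt).continuousWithinAt

theorem continuousOn_viscousPower (hM : IsOpen M) (hv : ContDiffOn ℝ 2 v M) :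
    ContinuousOn (viscousPower v) M :=
  (hv.continuousOn.fst.mul (continuousOn_vecLap hM hv).fst).add
    (hv.continuousOn.snd.mul (continuousOn_vecLap hM hv).snd)

theorem tendstoLocallyUniformlyOn_viscousPower (hM : IsOpen M) (hv : ContDiffOn ℝ 2 v M)
    (hu : TendstoLocallyUniformlyOn u v l M)
    (hu₂ : TendstoLocallyUniformlyOn (fun i ↦ iteratedFDeriv ℝ 2 (u i)) (iteratedFDeriv ℝ 2 v)
      l M) :
    TendstoLocallyUniformlyOn (fun i ↦ viscousPower (u i)) (viscousPower v) l M := by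
  have hΔ : TendstoLocallyUniformlyOn (fun i ↦ vecLap (u i)) (vecLap v) l M :=
    (bilinTrace (F := ℝ × ℝ)).uniformContinuous.comp_tendstoLocallyUniformlyOn hu₂
  have hΔv := continuousOn_vecLap hM hv
  have h₁ := (uniformContinuous_fst.comp_tendstoLocallyUniformlyOn hu).mul₀
    (uniformContinuous_fst.comp_tendstoLocallyUniformlyOn hΔ) hv.continuousOn.fst hΔv.fst
  have h₂ := (uniformContinuous_snd.comp_tendstoLocallyUniformlyOn hu).mul₀
    (uniformContinuous_snd.comp_tendstoLocallyUniformlyOn hΔ) hv.continuousOn.snd hΔv.snd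
  exact h₁.add h₂

theorem exists_streamFunction_tendstoLocallyUniformlyOn [SimplyConnectedSpace M] (hM : IsOpen M)
    (hψ : DifferentiableOn ℝ ψ M)
    (hNS : ∀ᶠ i in l, IsSteadyNavierStokes (ν i) M (u i) (p i))
    (hu : TendstoLocallyUniformlyOn u (perpGrad ψ) l M) :
    ∃ g : ι → ℝ × ℝ → ℝ, (∀ᶠ i in l, ∀ x ∈ M, HasFDerivAt (g i) (fluxForm (u i x)) x) ∧
      TendstoLocallyUniformlyOn g ψ l M := by
  have hMc : IsPreconnected M := isPreconnected_iff_preconnectedSpace.2 inferInstance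
  obtain ⟨x₀⟩ : Nonempty M := inferInstance
  choose! g hg using fun i (h : IsSteadyNavierStokes (ν i) M (u i) (p i)) ↦
    exists_streamFunction hM (h.contDiffOn_velocity.differentiableOn two_ne_zero)
      h.divergence_eq_zero x₀ (ψ x₀)
  refine ⟨g, hNS.mono fun i hi ↦ (hg i hi).2,
    tendstoLocallyUniformlyOn_of_hasFDerivAt hM hMc (hNS.mono fun i hi ↦ (hg i hi).2)
      (fun x hx ↦ ?_) (fluxForm.uniformContinuous.comp_tendstoLocallyUniformlyOn hu) x₀.2
      (tendsto_const_nhds.congr' (hNS.mono fun i hi ↦ (hg i hi).1.symm))⟩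
  have hψx := hψ.differentiableAt (hM.mem_nhds hx)
  change HasFDerivAt ψ (fluxForm (perpGrad ψ x)) x
  exact fderiv_eq_fluxForm_perpGrad hψx ▸ hψx.hasFDerivAt

theorem exists_isCompact_setIntegral_comp_mul_viscousPower_eq_zero [l.NeBot]
    [l.IsCountablyGenerated] [SimplyConnectedSpace M] (hM : IsOpen M)
    (hMc : IsCompact (closure M)) (hψ : ContDiffOn ℝ 3 ψ M) (hψc : ContinuousOn ψ (closure M))
    (hν : ∀ᶠ i in l, ν i ≠ 0) (hNS : ∀ᶠ i in l, IsSteadyNavierStokes (ν i) M (u i) (p i))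
    (hu : TendstoLocallyUniformlyOn u (perpGrad ψ) l M)
    (hu₂ : TendstoLocallyUniformlyOn (fun i ↦ iteratedFDeriv ℝ 2 (u i))
      (iteratedFDeriv ℝ 2 (perpGrad ψ)) l M)
    {η : ℝ → ℝ} (hη : ContDiff ℝ 1 η) (hηc : HasCompactSupport η)
    (hηψ : ∀ x ∈ frontier M, ψ x ∉ tsupport η) :
    ∃ K, IsCompact K ∧ K ⊆ M ∧ M ∩ ψ ⁻¹' tsupport η ⊆ interior K ∧
      ∫ x in K, η (ψ x) * viscousPower (perpGrad ψ) x = 0 := by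
  obtain ⟨K, K', hK, hKM, hK', hK'K, hηK', δ, hδ, hδη⟩ :=
    exists_isCompact_of_frontier_notMem hM hMc hψc (isClosed_tsupport η) hηψ
  refine ⟨K, hK, hKM, hηK'.trans hK'K, ?_⟩
  obtain ⟨g, hg, hgψ⟩ := exists_streamFunction_tendstoLocallyUniformlyOn hM
    (hψ.differentiableOn three_ne_zero) hNS hu
  have hψ₂ : ContDiffOn ℝ 2 (perpGrad ψ) M := fun x hx ↦
    (contDiffAt_perpGrad (n := 2) (hψ.contDiffAt (hM.mem_nhds hx))).contDiffWithinAt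
  have hlim : TendstoLocallyUniformlyOn (fun i x ↦ η (g i x) * viscousPower (u i) x)
      (fun x ↦ η (ψ x) * viscousPower (perpGrad ψ) x) l M :=
    ((hηc.uniformContinuous_of_continuous hη.continuous).comp_tendstoLocallyUniformlyOn hgψ).mul₀
      (tendstoLocallyUniformlyOn_viscousPower hM hψ₂ hu hu₂)
      (hη.continuous.comp_continuousOn hψ.continuousOn) (continuousOn_viscousPower hM hψ₂)
  have hzero : ∀ᶠ i in l, ∫ x in K, η (g i x) * viscousPower (u i) x = 0 := by
    filter_upwards [hν, hNS, hg, Metric.tendstoUniformlyOn_iff.1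
      ((tendstoLocallyUniformlyOn_iff_forall_isCompact hM).1 hgψ K hKM hK) δ hδ]
      with i hνi hi hgi hδi
    exact hi.setIntegral_comp_mul_viscousPower_eq_zero hM hνi hgi hη hK hKM hK' hK'K fun x hx ↦
      image_eq_zero_of_notMem_tsupport (hδη x hx _ (hδi x hx.1))
  refine tendsto_nhds_unique (tendsto_setIntegral_of_tendstoUniformlyOn hK hK.measurableSet ?_
    ((hη.continuous.comp_continuousOn (hψ.continuousOn.mono hKM)).mul
      ((continuousOn_viscousPower hM hψ₂).mono hKM))
    ((tendstoLocallyUniformlyOn_iff_forall_isCompact hM).1 hlim K hKM hK))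
    (tendsto_const_nhds.congr' (hzero.mono fun i hi ↦ hi.symm))
  filter_upwards [hNS, hg] with i hi hgi
  exact (hη.continuous.comp_continuousOn fun x hx ↦
    (hgi x (hKM hx)).continuousAt.continuousWithinAt).mul
      ((continuousOn_viscousPower hM hi.contDiffOn_velocity).mono hKM)

theorem fderiv_eq_zero_of_setIntegral_comp_mul_viscousPower_eq_zero (hM : IsOpen M)
    (hψ : ContDiffOn ℝ 3 ψ M) {F : ℝ → ℝ} (hF : Differentiable ℝ F)
    (hFψ : EqOn (lap ψ) (F ∘ ψ) M) {η : ℝ → ℝ} (hη : Continuous η) (hη₀ : ∀ t, 0 ≤ η t) {a : ℝ}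
    (hηF : ∀ t ∈ support η, 0 < a * deriv F t) {K : Set (ℝ × ℝ)} (hK : IsCompact K) (hKM : K ⊆ M)
    (hint : ∫ x in K, η (ψ x) * viscousPower (perpGrad ψ) x = 0)
    {x : ℝ × ℝ} (hx : x ∈ interior K) (hxη : ψ x ∈ support η) : fderiv ℝ ψ x = 0 := by
  have hψK (y) (hy : y ∈ K) : ContDiffAt ℝ 3 ψ y := hψ.contDiffAt (hM.mem_nhds (hKM hy))
  have hψ₂ : ContDiffOn ℝ 2 (perpGrad ψ) M := fun y hy ↦
    (contDiffAt_perpGrad (n := 2) (hψ.contDiffAt (hM.mem_nhds hy))).contDiffWithinAt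
  have hformula (y) (hy : y ∈ K) : a * (η (ψ y) * viscousPower (perpGrad ψ) y) =
      η (ψ y) * (a * deriv F (ψ y) * (pd1 ψ y ^ 2 + pd2 ψ y ^ 2)) := by
    rw [viscousPower_perpGrad_of_lap_eq_comp (hψK y hy) (hF _)
      (hFψ.eventuallyEq_of_mem (hM.mem_nhds (hKM hy)))]
    ring
  have hnonneg (y) (hy : y ∈ K) : 0 ≤ a * (η (ψ y) * viscousPower (perpGrad ψ) y) := by
    rw [hformula y hy]
    by_cases hyη : η (ψ y) = 0
    · rw [hyη, zero_mul]
    · exact mul_nonneg (hη₀ _) (mul_nonneg (hηF _ hyη).le (by positivity))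
  have hzero : a * (η (ψ x) * viscousPower (perpGrad ψ) x) = 0 :=
    eqOn_zero_interior_of_setIntegral_eq_zero (μ := volume) hK hK.measurableSet
      (continuousOn_const.mul (((hη.comp_continuousOn hψ.continuousOn).mul
        (continuousOn_viscousPower hM hψ₂)).mono hKM))
      hnonneg ((integral_const_mul a _).trans (mul_eq_zero_of_right a hint)) hx
  have hxK := interior_subset hx
  have hgrad : pd1 ψ x ^ 2 + pd2 ψ x ^ 2 = 0 := by
    rw [hformula x hxK] at hzero
    exact (mul_eq_zero.1 ((mul_eq_zero.1 hzero).resolve_left hxη)).resolve_left (hηF _ hxη).ne'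
  have hpd := (add_eq_zero_iff_of_nonneg (sq_nonneg _) (sq_nonneg _)).1 hgrad
  exact (fderiv_eq_zero_iff_pd ((hψK x hxK).differentiableAt three_ne_zero)).2
    ⟨pow_eq_zero_iff two_ne_zero |>.1 hpd.1, pow_eq_zero_iff two_ne_zero |>.1 hpd.2⟩

theorem fderiv_lap_eq_zero_of_notMem_image_frontier [l.NeBot] [l.IsCountablyGenerated]
    [SimplyConnectedSpace M] (hM : IsOpen M) (hMc : IsCompact (closure M))
    (hψ : ContDiffOn ℝ 3 ψ M) (hψc : ContinuousOn ψ (closure M))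
    {F : ℝ → ℝ} (hF : ContDiff ℝ 1 F) (hFψ : EqOn (lap ψ) (F ∘ ψ) M)
    (hν : ∀ᶠ i in l, ν i ≠ 0) (hNS : ∀ᶠ i in l, IsSteadyNavierStokes (ν i) M (u i) (p i))
    (hu : TendstoLocallyUniformlyOn u (perpGrad ψ) l M)
    (hu₂ : TendstoLocallyUniformlyOn (fun i ↦ iteratedFDeriv ℝ 2 (u i))
      (iteratedFDeriv ℝ 2 (perpGrad ψ)) l M)
    {x : ℝ × ℝ} (hx : x ∈ M) (hxψ : ψ x ∉ ψ '' frontier M) : fderiv ℝ (lap ψ) x = 0 := by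
  have hFd : Differentiable ℝ F := hF.differentiable one_ne_zero
  have hxM : M ∈ 𝓝 x := hM.mem_nhds hx
  rw [fderiv_lap_of_lap_eq_comp ((hψ.contDiffAt hxM).differentiableAt three_ne_zero) (hFd _)
    (hFψ.eventuallyEq_of_mem hxM)]
  by_cases hc : deriv F (ψ x) = 0
  · rw [hc, zero_smul]
  have hbdry : IsClosed (ψ '' frontier M) :=
    ((hMc.of_isClosed_subset isClosed_frontier frontier_subset_closure).image_of_continuousOn
      (hψc.mono frontier_subset_closure)).isClosed
  obtain ⟨η, hηb, hηF⟩ := exists_contDiffBump_forall_pos_mul (hF.continuous_deriv le_rfl) hc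
    (hbdry.isOpen_compl.mem_nhds hxψ)
  obtain ⟨K, hK, hKM, hηK, hint⟩ := exists_isCompact_setIntegral_comp_mul_viscousPower_eq_zero hM
    hMc hψ hψc hν hNS hu hu₂ η.contDiff η.hasCompactSupport
    fun y hy hyη ↦ hηb hyη (mem_image_of_mem ψ hy)
  have hxη : ψ x ∈ support η := η.support_eq ▸ Metric.mem_ball_self η.rOut_pos
  rw [fderiv_eq_zero_of_setIntegral_comp_mul_viscousPower_eq_zero hM hψ hFd hFψ η.continuous
    η.nonneg' (fun t ht ↦ hηF t (subset_tsupport η ht)) hK hKM hint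
    (hηK ⟨hx, subset_tsupport η hxη⟩) hxη, smul_zero]

end InviscidLimit

theorem prandtl_batchelor_general {ι : Type*} {l : Filter ι} [l.NeBot] [l.IsCountablyGenerated]
    {M : Set (ℝ × ℝ)} [SimplyConnectedSpace M] (hM : IsOpen M) (hMc : IsCompact (closure M))
    {ψ : ℝ × ℝ → ℝ} (hψ : ContDiffOn ℝ 3 ψ M) (hψc : ContinuousOn ψ (closure M))
    (hψb : interior (ψ '' frontier M) = ∅)
    {F : ℝ → ℝ} (hF : ContDiff ℝ 1 F) (hFψ : EqOn (lap ψ) (F ∘ ψ) M)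
    {ν : ι → ℝ} {u : ι → ℝ × ℝ → ℝ × ℝ} {p : ι → ℝ × ℝ → ℝ} (hν : ∀ᶠ i in l, ν i ≠ 0)
    (hNS : ∀ᶠ i in l, IsSteadyNavierStokes (ν i) M (u i) (p i))
    (hu : TendstoLocallyUniformlyOn u (perpGrad ψ) l M)
    (hu₂ : TendstoLocallyUniformlyOn (fun i ↦ iteratedFDeriv ℝ 2 (u i))
      (iteratedFDeriv ℝ 2 (perpGrad ψ)) l M) :
    ((ψ '' closure M).Nontrivial → ∀ c ∈ ψ '' closure M, deriv F c = 0) ∧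
      ∃ ω₀ : ℝ, ∀ x ∈ M, lap ψ x = ω₀ := by
  have hFd : Differentiable ℝ F := hF.differentiable one_ne_zero
  have hMconn : IsPreconnected M := isPreconnected_iff_preconnectedSpace.2 inferInstance
  have hω' := fderiv_lap_eq_zero_of_interior_eq_empty hM hψ hFd hFψ hψb fun x hx hxψ ↦
    fderiv_lap_eq_zero_of_notMem_image_frontier hM hMc hψ hψc hF hFψ hν hNS hu hu₂ hx hxψ
  obtain ⟨ω₀, hω₀⟩ := hM.exists_is_const_of_fderiv_eq_zero hMconn (fun x hx ↦
    ((contDiffAt_lap (hψ.contDiffAt (hM.mem_nhds hx))).differentiableAt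
      one_ne_zero).differentiableWithinAt) hω'
  have hFω : EqOn (F ∘ ψ) (fun _ ↦ ω₀) (closure M) :=
    EqOn.of_subset_closure (fun x hx ↦ (hFψ hx).symm.trans (hω₀ x hx))
      (hF.continuous.comp_continuousOn hψc) continuousOn_const subset_closure subset_rfl
  exact ⟨fun hψn c hc ↦ deriv_eq_zero_of_eqOn_const (hMconn.closure.image ψ hψc) hψn
    (forall_mem_image.2 hFω) hc (hFd c), ω₀, hω₀⟩

/-- **Prandtl–Batchelor theorem.**  Let `ψ` be a smooth streamfunction of a steady Euler
flow `u_e = ∇^⊥ψ` on a bounded, simply connected domain `M` with smooth boundary, with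
`Δψ = F(ψ)` for a `C¹` function `F`, `ψ = c* > 0` on `∂M`, a unique critical point,
range `[0, c*]`, smooth closed level curves with nonvanishing circulation.  If for every
`ν > 0` there is a smooth steady Navier–Stokes solution `(u^ν, p^ν)` in `M`, and
`u^ν → u_e` in `C²` uniformly on compact subsets of `M` as `ν → 0`, then `F' ≡ 0` on
`[0, c*]`, i.e. the Euler flow has constant vorticity `Δψ ≡ ω₀` in `M`. -/
theorem prandtl_batchelor
    (M : Set (ℝ × ℝ)) (hMopen : IsOpen M) (hMbdd : Bornology.IsBounded M)
    (hMsc : SimplyConnectedSpace M)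
    -- smooth boundary: the frontier of M is a smooth closed arclength curve
    (Lb : ℝ) (hLb : 0 < Lb) (Γ : ℝ → ℝ × ℝ) (hΓ : ContDiff ℝ (⊤ : ℕ∞) Γ)
    (hΓper : Periodic Γ Lb)
    (hΓarc : ∀ s, (deriv Γ s).1 ^ 2 + (deriv Γ s).2 ^ 2 = 1)
    (hΓimg : Γ '' Ico 0 Lb = frontier M)
    -- the stream function and the Euler flow
    (cStar : ℝ) (hc : 0 < cStar)
    (ψ : ℝ × ℝ → ℝ) (hψ : ContDiff ℝ (⊤ : ℕ∞) ψ)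
    (hψbd : ∀ x ∈ frontier M, ψ x = cStar)
    (F : ℝ → ℝ) (hF : ContDiff ℝ 1 F)
    (hFψ : ∀ x ∈ M, lap ψ x = F (ψ x))
    (ue : ℝ × ℝ → ℝ × ℝ) (hue : ue = fun x => (-(pd2 ψ x), pd1 ψ x))
    -- single nondegenerate eddy hypotheses
    (hcrit : ∃! x : ℝ × ℝ, x ∈ M ∧ pd1 ψ x = 0 ∧ pd2 ψ x = 0)
    (hrange : ψ '' closure M = Icc 0 cStar)
    (hlevels : ∀ c ∈ Ioc (0:ℝ) cStar, ∃ ℓ > (0:ℝ), ∃ γ : ℝ → ℝ × ℝ,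
      ContDiff ℝ (⊤ : ℕ∞) γ ∧ Periodic γ ℓ ∧
      (∀ s, (deriv γ s).1 ^ 2 + (deriv γ s).2 ^ 2 = 1) ∧
      γ '' Ico 0 ℓ = {x ∈ closure M | ψ x = c} ∧
      (∫ s in (0:ℝ)..ℓ,
        ((ue (γ s)).1 * (deriv γ s).1 + (ue (γ s)).2 * (deriv γ s).2)) ≠ 0)
    -- the family of steady Navier-Stokes solutions
    (u : ℝ → ℝ × ℝ → ℝ × ℝ) (p : ℝ → ℝ × ℝ → ℝ)
    (husmooth : ∀ ν > (0:ℝ), ContDiff ℝ (⊤ : ℕ∞) (u ν) ∧ ContDiff ℝ (⊤ : ℕ∞) (p ν))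
    (hNS1 : ∀ ν > (0:ℝ), ∀ x ∈ M,
      (u ν x).1 * pd1 (fun y => (u ν y).1) x + (u ν x).2 * pd2 (fun y => (u ν y).1) x
        = - pd1 (p ν) x + ν * lap (fun y => (u ν y).1) x)
    (hNS2 : ∀ ν > (0:ℝ), ∀ x ∈ M,
      (u ν x).1 * pd1 (fun y => (u ν y).2) x + (u ν x).2 * pd2 (fun y => (u ν y).2) x
        = - pd2 (p ν) x + ν * lap (fun y => (u ν y).2) x)
    (hdiv : ∀ ν > (0:ℝ), ∀ x ∈ M,
      pd1 (fun y => (u ν y).1) x + pd2 (fun y => (u ν y).2) x = 0)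
    -- locally uniform C² convergence of u^ν to u_e as ν → 0
    (hconv : ∀ K : Set (ℝ × ℝ), IsCompact K → K ⊆ M → ∀ ε > (0:ℝ), ∃ ν₀ > (0:ℝ),
      ∀ ν : ℝ, 0 < ν → ν < ν₀ → ∀ x ∈ K, ∀ i ≤ 2,
        ‖iteratedFDeriv ℝ i (u ν) x - iteratedFDeriv ℝ i ue x‖ ≤ ε) :
    (∀ c ∈ Icc (0:ℝ) cStar, deriv F c = 0) ∧
    (∃ ω₀ : ℝ, ∀ x ∈ M, lap ψ x = ω₀) := by
  subst hue
  have hψ₃ : ContDiff ℝ 3 ψ := contDiff_infty.1 hψ 3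
  have hNS : ∀ ν > 0, IsSteadyNavierStokes ν M (u ν) (p ν) := fun ν hν ↦
    { contDiffOn_velocity := (contDiff_infty.1 (husmooth ν hν).1 2).contDiffOn
      contDiffOn_pressure := (contDiff_infty.1 (husmooth ν hν).2 1).contDiffOn
      momentum_fst := hNS1 ν hν
      momentum_snd := hNS2 ν hν
      divergence_eq_zero := hdiv ν hν }
  have hlim (i : ℕ) (hi : i ≤ 2) : TendstoLocallyUniformlyOn (fun ν ↦ iteratedFDeriv ℝ i (u ν))
      (iteratedFDeriv ℝ i (perpGrad ψ)) (𝓝[>] 0) M :=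
    tendstoLocallyUniformlyOn_nhdsGT_zero hMopen fun K hK hKM ε hε ↦
      (hconv K hK hKM ε hε).imp fun ν₀ h ↦ ⟨h.1, fun ν hν hν₀ x hx ↦ h.2 ν hν hν₀ x hx i hi⟩
  have hψb : interior (ψ '' frontier M) = ∅ := subset_eq_empty
    (interior_mono (t := {cStar}) (image_subset_iff.2 hψbd)) (interior_singleton cStar)
  have hmain := prandtl_batchelor_general hMopen hMbdd.isCompact_closure hψ₃.contDiffOn
    hψ₃.continuous.continuousOn hψb hF hFψ (l := 𝓝[>] 0) (ν := id)
    (eventually_mem_nhdsWithin.mono fun _ ↦ ne_of_gt) (eventually_mem_nhdsWithin.mono hNS)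
    (tendstoLocallyUniformlyOn_of_iteratedFDeriv_zero (hlim 0 zero_le_two)) (hlim 2 le_rfl)
  rw [hrange] at hmain
  exact hmain.imp_left fun h ↦
    h (Set.nontrivial_of_lt (left_mem_Icc.2 hc.le) (right_mem_Icc.2 hc.le) hc)
end

section
/- Consider the setting of the linear problem: q_e : 𝕋_L → ℝ smooth and positive, ω₀ > 0, and smooth Q, F, G on 𝕋_L × [0,∞) with smooth b : 𝕋_L → ℝ satisfying ∂_s Q − ω₀ q_e(s) ∂_ψ² Q = F + ∂_ψ² G, Q(s,0) = b(s), Q(s,ψ) → 0 as ψ → ∞. Fix integers k, m ≥ 0 and write Q^{(j)} := ∂_s^j Q, F^{(k)} := ∂_s^k F, G^{(k)} := ∂_s^k G. Then for every δ > 0 there is a constant C_δ (depending on δ, k, m, L, ω₀, q_e, with C_δ → ∞ as δ → 0) such that ‖⟨ψ⟩^m ∂_ψ Q^{(k)}‖²_{L²} ≤ C_δ ‖⟨ψ⟩^m F^{(k)}‖²_{L²} + C_δ ‖⟨ψ⟩^m ∂_ψ² G^{(k)}‖²_{L²} + C_δ ‖b‖²_{H^{k+1}(𝕋_L)} + δ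 ‖⟨ψ⟩^m Q^{(k)}‖²_{L²} + C_δ 𝟙_{k≥1} Σ_{k'=0}^{k−1} ‖⟨ψ⟩^m ∂_ψ Q^{(k')}‖²_{L²} + 𝟙_{m≥1} ‖⟨ψ⟩^{m−1} Q^{(k)}‖²_{L²}, provided all norms appearing are finite. -/
open MeasureTheory Set Function Filter

/-- `k`-th partial derivative in the tangential variable `s` of a function on
`𝕋_L × [0,∞)` (represented as a curried function `ℝ → ℝ → ℝ`). -/
noncomputable def dS (k : ℕ) (h : ℝ → ℝ → ℝ) : ℝ → ℝ → ℝ :=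
  fun s ψ => iteratedDeriv k (fun s' => h s' ψ) s

/-- `j`-th partial derivative in the normal (von Mises) variable `ψ`. -/
noncomputable def dPsi (j : ℕ) (h : ℝ → ℝ → ℝ) : ℝ → ℝ → ℝ :=
  fun s ψ => iteratedDeriv j (fun ψ' => h s ψ') ψ

/-- Squared `L²` norm over `𝕋_L × ℝ₊` (fundamental domain `(0,L] × (0,∞)`). -/
noncomputable def L2sq (L : ℝ) (h : ℝ → ℝ → ℝ) : ℝ :=
  ∫ p in Ioc (0:ℝ) L ×ˢ Ioi (0:ℝ), (h p.1 p.2) ^ 2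

/-- Square-integrability over `𝕋_L × ℝ₊`. -/
def FiniteL2 (L : ℝ) (h : ℝ → ℝ → ℝ) : Prop :=
  IntegrableOn (fun p : ℝ × ℝ => (h p.1 p.2) ^ 2) (Ioc (0:ℝ) L ×ˢ Ioi (0:ℝ))

/-- The weight `⟨ψ⟩^m h`. -/
noncomputable def wt (m : ℕ) (h : ℝ → ℝ → ℝ) : ℝ → ℝ → ℝ :=
  fun s ψ => (1 + ψ) ^ m * h s ψ

/-- Squared `X_{k,m}` norm:
`‖h‖²_{X_{k,m}} = Σ_{k'≤k} Σ_{m'≤m} (‖⟨ψ⟩^{m'}∂_s^{k'}h‖² + ‖⟨ψ⟩^{m'}∂_s^{k'+1}h‖²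
+ ‖⟨ψ⟩^{m'}∂_ψ∂_s^{k'}h‖² + ‖⟨ψ⟩^{m'}∂_ψ²∂_s^{k'}h‖²)`. -/
noncomputable def XnormSq (L : ℝ) (k m : ℕ) (h : ℝ → ℝ → ℝ) : ℝ :=
  ∑ k' ∈ Finset.range (k+1), ∑ m' ∈ Finset.range (m+1),
    (L2sq L (wt m' (dS k' h)) + L2sq L (wt m' (dS (k'+1) h))
      + L2sq L (wt m' (dPsi 1 (dS k' h))) + L2sq L (wt m' (dPsi 2 (dS k' h))))

/-- The `X_{k,m}` norm. -/
noncomputable def Xnorm (L : ℝ) (k m : ℕ) (h : ℝ → ℝ → ℝ) : ℝ :=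
  Real.sqrt (XnormSq L k m h)

/-- Membership in the space `X_{k,m}`: all the defining integrands are integrable. -/
def XFinite (L : ℝ) (k m : ℕ) (h : ℝ → ℝ → ℝ) : Prop :=
  ∀ k' ≤ k, ∀ m' ≤ m,
    FiniteL2 L (wt m' (dS k' h)) ∧ FiniteL2 L (wt m' (dS (k'+1) h))
      ∧ FiniteL2 L (wt m' (dPsi 1 (dS k' h))) ∧ FiniteL2 L (wt m' (dPsi 2 (dS k' h)))

/-- Joint smoothness of a curried function of two real variables. -/
def Smooth2 (h : ℝ → ℝ → ℝ) : Prop :=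
  ContDiff ℝ (⊤ : ℕ∞) (fun p : ℝ × ℝ => h p.1 p.2)

/-- Periodicity in the first (tangential) variable. -/
def PeriodicS (L : ℝ) (h : ℝ → ℝ → ℝ) : Prop :=
  ∀ ψ : ℝ, Function.Periodic (fun s => h s ψ) L

/-- Squared `H^n` norm of a function on `𝕋_L`. -/
noncomputable def HnormSq (L : ℝ) (n : ℕ) (b : ℝ → ℝ) : ℝ :=
  ∑ j ∈ Finset.range (n+1), ∫ s in (0:ℝ)..L, (iteratedDeriv j b s) ^ 2

/-! Differentiating the equation `k` times in `s` gives the same equation for `u = ∂_s^k Q`, up to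
the commutator `[∂_s^k, a] ∂_ψ² Q` with `a = ω₀ q_e`. Written as `∂_ψ ([∂_s^k, a] ∂_ψ Q)`, it can be
integrated by parts and costs only the lower order norms of `∂_ψ ∂_s^i Q`, `i < k`. The boundary
value is removed by subtracting the lift `e^{-ψ} ∂_s^k b`.

The remainder `v` vanishes on the boundary and is tested against `v W`, where
`W = ⟨ψ⟩^{2m} + K (1 - e^{-ψ})` is comparable with `⟨ψ⟩^{2m}`. Periodicity kills the `∂_s` term, and
commuting the diffusion with the weight leaves `∫ a v² W'' / 2`. Since `(1 - e^{-ψ})'' < 0`, a large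
`K` makes `W''` at most a small multiple of `⟨ψ⟩^{2m}`, so this term is absorbed by
`δ ‖⟨ψ⟩^m ∂_s^k Q‖²`. -/

open scoped ContDiff

/-! ### Partial derivatives of smooth functions of two variables -/

theorem dS_zero (h : ℝ → ℝ → ℝ) : dS 0 h = h := by
  funext s ψ
  simp only [dS, iteratedDeriv_zero]

theorem dS_succ (k : ℕ) (h : ℝ → ℝ → ℝ) : dS (k + 1) h = dS 1 (dS k h) := by
  funext s ψ
  simp only [dS, iteratedDeriv_succ, iteratedDeriv_zero]

theorem dS_succ' (k : ℕ) (h : ℝ → ℝ → ℝ) : dS (k + 1) h = dS k (dS 1 h) := by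
  funext s ψ
  simp only [dS, iteratedDeriv_succ', iteratedDeriv_zero]

theorem dPsi_zero (h : ℝ → ℝ → ℝ) : dPsi 0 h = h := by
  funext s ψ
  simp only [dPsi, iteratedDeriv_zero]

theorem dPsi_succ (j : ℕ) (h : ℝ → ℝ → ℝ) : dPsi (j + 1) h = dPsi 1 (dPsi j h) := by
  funext s ψ
  simp only [dPsi, iteratedDeriv_succ, iteratedDeriv_zero]

theorem dPsi_two (h : ℝ → ℝ → ℝ) : dPsi 2 h = dPsi 1 (dPsi 1 h) :=
  dPsi_succ 1 h

theorem dPsi_coeff_mul (j : ℕ) (a : ℝ → ℝ) (h : ℝ → ℝ → ℝ) :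
    dPsi j (fun s ψ => a s * h s ψ) = fun s ψ => a s * dPsi j h s ψ := by
  funext s ψ
  exact iteratedDeriv_const_mul_field (a s) fun ψ' => h s ψ'

theorem iteratedDeriv_periodic {f : ℝ → ℝ} {L : ℝ} (hf : Periodic f L) (k : ℕ) :
    Periodic (iteratedDeriv k f) L := fun s => by
  rw [← congrFun (iteratedDeriv_comp_add_const k f L) s, funext hf]

theorem PeriodicS.periodicS_dS {L : ℝ} {h : ℝ → ℝ → ℝ} (hh : PeriodicS L h) (k : ℕ) :
    PeriodicS L (dS k h) := fun ψ =>
  iteratedDeriv_periodic (hh ψ) k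

theorem contDiff_infty_iteratedDeriv {a : ℝ → ℝ} (ha : ContDiff ℝ ∞ a) (n : ℕ) :
    ContDiff ℝ ∞ (iteratedDeriv n a) := by
  rw [iteratedDeriv_eq_iterate]
  exact ha.iterate_deriv n

section Smooth2

variable {g h : ℝ → ℝ → ℝ}

theorem Smooth2.continuous (hh : Smooth2 h) : Continuous fun p : ℝ × ℝ => h p.1 p.2 :=
  ContDiff.continuous hh

theorem Smooth2.add (hg : Smooth2 g) (hh : Smooth2 h) : Smooth2 (g + h) :=
  ContDiff.add hg hh

theorem Smooth2.sub (hg : Smooth2 g) (hh : Smooth2 h) : Smooth2 (g - h) :=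
  ContDiff.sub hg hh

theorem Smooth2.coeff_mul {a : ℝ → ℝ} (ha : ContDiff ℝ ∞ a) (hh : Smooth2 h) :
    Smooth2 fun s ψ => a s * h s ψ :=
  (ha.comp contDiff_fst).mul hh

theorem Smooth2.contDiff_left (hh : Smooth2 h) (ψ : ℝ) : ContDiff ℝ ∞ fun s => h s ψ :=
  ContDiff.comp (g := fun p : ℝ × ℝ => h p.1 p.2) hh (contDiff_prodMk_left ψ)

theorem Smooth2.contDiff_right (hh : Smooth2 h) (s : ℝ) : ContDiff ℝ ∞ fun ψ => h s ψ :=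
  ContDiff.comp (g := fun p : ℝ × ℝ => h p.1 p.2) hh (contDiff_prodMk_right s)

theorem Smooth2.hasDerivAt_dS (hh : Smooth2 h) (s ψ : ℝ) :
    HasDerivAt (fun s' => h s' ψ) (dS 1 h s ψ) s := by
  simp only [dS, iteratedDeriv_one]
  exact ((hh.contDiff_left ψ).differentiable (by simp) s).hasDerivAt

theorem Smooth2.hasDerivAt_dPsi (hh : Smooth2 h) (s ψ : ℝ) :
    HasDerivAt (fun ψ' => h s ψ') (dPsi 1 h s ψ) ψ := by
  simp only [dPsi, iteratedDeriv_one]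
  exact ((hh.contDiff_right s).differentiable (by simp) ψ).hasDerivAt

theorem Smooth2.hasFDerivAt (hh : Smooth2 h) (p : ℝ × ℝ) :
    HasFDerivAt (fun p : ℝ × ℝ => h p.1 p.2) (fderiv ℝ (fun p : ℝ × ℝ => h p.1 p.2) p) p :=
  (ContDiff.differentiable hh (by simp) p).hasFDerivAt

theorem Smooth2.dS_one_eq_fderiv (hh : Smooth2 h) (p : ℝ × ℝ) :
    dS 1 h p.1 p.2 = fderiv ℝ (fun p : ℝ × ℝ => h p.1 p.2) p (1, 0) := by
  have slice : HasDerivAt (fun s => (s, p.2)) ((1 : ℝ), (0 : ℝ)) p.1 :=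
    (hasDerivAt_id p.1).prodMk (hasDerivAt_const p.1 p.2)
  have chain := (hh.hasFDerivAt p).comp_hasDerivAt p.1 slice
  exact (hh.hasDerivAt_dS p.1 p.2).unique chain

theorem Smooth2.dPsi_one_eq_fderiv (hh : Smooth2 h) (p : ℝ × ℝ) :
    dPsi 1 h p.1 p.2 = fderiv ℝ (fun p : ℝ × ℝ => h p.1 p.2) p (0, 1) := by
  have slice : HasDerivAt (fun ψ => (p.1, ψ)) ((0 : ℝ), (1 : ℝ)) p.2 :=
    (hasDerivAt_const p.2 p.1).prodMk (hasDerivAt_id p.2)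
  have chain := (hh.hasFDerivAt p).comp_hasDerivAt p.2 slice
  exact (hh.hasDerivAt_dPsi p.1 p.2).unique chain

theorem Smooth2.contDiff_fderiv (hh : Smooth2 h) :
    ContDiff ℝ ∞ (fderiv ℝ fun p : ℝ × ℝ => h p.1 p.2) :=
  ContDiff.fderiv_right hh (by simp)

theorem Smooth2.smooth2_dS (hh : Smooth2 h) (k : ℕ) : Smooth2 (dS k h) := by
  induction k with
  | zero => rwa [dS_zero]
  | succ k ih =>
    rw [dS_succ, Smooth2, funext ih.dS_one_eq_fderiv]
    exact ih.contDiff_fderiv.clm_apply contDiff_const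

theorem Smooth2.smooth2_dPsi (hh : Smooth2 h) (j : ℕ) : Smooth2 (dPsi j h) := by
  induction j with
  | zero => rwa [dPsi_zero]
  | succ j ih =>
    rw [dPsi_succ, Smooth2, funext ih.dPsi_one_eq_fderiv]
    exact ih.contDiff_fderiv.clm_apply contDiff_const

theorem Smooth2.dS_one_dPsi_one (hh : Smooth2 h) : dS 1 (dPsi 1 h) = dPsi 1 (dS 1 h) := by
  funext s ψ
  have symm : IsSymmSndFDerivAt ℝ (fun p : ℝ × ℝ => h p.1 p.2) (s, ψ) :=
    (ContDiff.contDiffAt hh).isSymmSndFDerivAt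
      (by simpa using WithTop.coe_le_coe.2 (le_top : (2 : ℕ∞) ≤ ⊤))
  have diff : DifferentiableAt ℝ (fderiv ℝ fun p : ℝ × ℝ => h p.1 p.2) (s, ψ) :=
    hh.contDiff_fderiv.differentiable (by simp) _
  rw [(hh.smooth2_dPsi 1).dS_one_eq_fderiv (s, ψ), (hh.smooth2_dS 1).dPsi_one_eq_fderiv (s, ψ),
    funext hh.dS_one_eq_fderiv, funext hh.dPsi_one_eq_fderiv,
    fderiv_clm_apply diff (differentiableAt_const _),
    fderiv_clm_apply diff (differentiableAt_const _)]
  simpa using symm.eq (1, 0) (0, 1)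

theorem Smooth2.dS_dPsi_one (hh : Smooth2 h) (k : ℕ) : dS k (dPsi 1 h) = dPsi 1 (dS k h) := by
  induction k with
  | zero => simp only [dS_zero]
  | succ k ih => rw [dS_succ k (dPsi 1 h), ih, (hh.smooth2_dS k).dS_one_dPsi_one, ← dS_succ]

theorem Smooth2.dS_dPsi (hh : Smooth2 h) (k j : ℕ) : dS k (dPsi j h) = dPsi j (dS k h) := by
  induction j with
  | zero => simp only [dPsi_zero]
  | succ j ih => rw [dPsi_succ j h, (hh.smooth2_dPsi j).dS_dPsi_one, ih, ← dPsi_succ]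

theorem Smooth2.dS_add (hg : Smooth2 g) (hh : Smooth2 h) (k : ℕ) :
    dS k (g + h) = dS k g + dS k h := by
  funext s ψ
  exact iteratedDeriv_add ((hg.contDiff_left ψ).contDiffAt.of_le (by exact_mod_cast le_top))
    ((hh.contDiff_left ψ).contDiffAt.of_le (by exact_mod_cast le_top))

theorem Smooth2.dS_sub (hg : Smooth2 g) (hh : Smooth2 h) (k : ℕ) :
    dS k (g - h) = dS k g - dS k h := by
  funext s ψ
  exact iteratedDeriv_sub ((hg.contDiff_left ψ).contDiffAt.of_le (by exact_mod_cast le_top))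
    ((hh.contDiff_left ψ).contDiffAt.of_le (by exact_mod_cast le_top))

theorem Smooth2.dPsi_sub (hg : Smooth2 g) (hh : Smooth2 h) (j : ℕ) :
    dPsi j (g - h) = dPsi j g - dPsi j h := by
  funext s ψ
  exact iteratedDeriv_sub ((hg.contDiff_right s).contDiffAt.of_le (by exact_mod_cast le_top))
    ((hh.contDiff_right s).contDiffAt.of_le (by exact_mod_cast le_top))

end Smooth2

/-! ### Weighted square-integrable functions on the half-strip -/

/-- The fundamental domain of `𝕋_L × ℝ₊`. -/
abbrev halfStrip (L : ℝ) : Set (ℝ × ℝ) :=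
  Ioc 0 L ×ˢ Ioi 0

theorem measurableSet_halfStrip (L : ℝ) : MeasurableSet (halfStrip L) :=
  measurableSet_Ioc.prod measurableSet_Ioi

theorem L2sq_nonneg (L : ℝ) (h : ℝ → ℝ → ℝ) : 0 ≤ L2sq L h :=
  integral_nonneg fun _ => sq_nonneg _

/-- Membership of `⟨ψ⟩^m h` in `L²(𝕋_L × ℝ₊)`. Unlike `FiniteL2` it includes measurability, so that
it is stable under sums. -/
def WeightedL2 (L : ℝ) (m : ℕ) (h : ℝ → ℝ → ℝ) : Prop :=
  MemLp (fun p : ℝ × ℝ => wt m h p.1 p.2) 2 (volume.restrict (halfStrip L))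

theorem continuous_wt (m : ℕ) {h : ℝ → ℝ → ℝ} (hh : Continuous fun p : ℝ × ℝ => h p.1 p.2) :
    Continuous fun p : ℝ × ℝ => wt m h p.1 p.2 :=
  ((continuous_const.add continuous_snd).pow m).mul hh

theorem FiniteL2.weightedL2 {L : ℝ} {m : ℕ} {h : ℝ → ℝ → ℝ} (hfin : FiniteL2 L (wt m h))
    (hh : Continuous fun p : ℝ × ℝ => h p.1 p.2) : WeightedL2 L m h :=
  (memLp_two_iff_integrable_sq (continuous_wt m hh).aestronglyMeasurable).2 hfin

theorem L2sq_eq_intervalIntegral_sq_mul {L : ℝ} (hL : 0 ≤ L) (α β : ℝ → ℝ) :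
    L2sq L (fun s ψ => α s * β ψ) = (∫ s in (0 : ℝ)..L, α s ^ 2) * ∫ ψ in Ioi 0, β ψ ^ 2 := by
  simp only [L2sq, mul_pow]
  rw [Measure.volume_eq_prod, setIntegral_prod_mul (fun s => α s ^ 2) (fun ψ => β ψ ^ 2),
    intervalIntegral.integral_of_le hL]

section WeightedL2

variable {L : ℝ} {m : ℕ} {x y : ℝ → ℝ → ℝ} {c : ℝ → ℝ} {B : ℝ}

theorem WeightedL2.integrable_sq (hx : WeightedL2 L m x) :
    IntegrableOn (fun p : ℝ × ℝ => wt m x p.1 p.2 ^ 2) (halfStrip L) :=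
  MemLp.integrable_sq hx

theorem WeightedL2.add (hx : WeightedL2 L m x) (hy : WeightedL2 L m y) :
    WeightedL2 L m (x + y) :=
  (MemLp.add hx hy).ae_eq (.of_forall fun _ => (mul_add _ _ _).symm)

theorem WeightedL2.sub (hx : WeightedL2 L m x) (hy : WeightedL2 L m y) :
    WeightedL2 L m (x - y) :=
  (MemLp.sub hx hy).ae_eq (.of_forall fun _ => (mul_sub _ _ _).symm)

theorem WeightedL2.finsetSum {ι : Type*} {S : Finset ι} {z : ι → ℝ → ℝ → ℝ}
    (hz : ∀ i ∈ S, WeightedL2 L m (z i)) : WeightedL2 L m fun s ψ => ∑ i ∈ S, z i s ψ :=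
  (memLp_finsetSum S hz).ae_eq (.of_forall fun _ => (Finset.mul_sum _ _ _).symm)

theorem abs_wt_coeff_mul_le {s : ℝ} (hc : |c s| ≤ B) (ψ : ℝ) :
    |wt m (fun s ψ => c s * x s ψ) s ψ| ≤ B * |wt m x s ψ| := by
  have swap : wt m (fun s ψ => c s * x s ψ) s ψ = c s * wt m x s ψ := by
    simp only [wt]
    ring
  rw [swap, abs_mul]
  gcongr

theorem WeightedL2.coeff_mul (hc : Continuous c) (hB : ∀ s ∈ Icc 0 L, |c s| ≤ B)
    (hx : WeightedL2 L m x) : WeightedL2 L m fun s ψ => c s * x s ψ := by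
  have meas : AEStronglyMeasurable (fun p : ℝ × ℝ => wt m (fun s ψ => c s * x s ψ) p.1 p.2)
      (volume.restrict (halfStrip L)) :=
    ((hc.comp continuous_fst).aestronglyMeasurable.mul hx.aestronglyMeasurable).congr
      (.of_forall fun _ => mul_left_comm _ _ _)
  refine MemLp.of_le_mul (c := B) hx meas ?_
  exact (ae_restrict_mem (measurableSet_halfStrip L)).mono fun p hp =>
    abs_wt_coeff_mul_le (hB p.1 (Ioc_subset_Icc_self hp.1)) p.2

theorem L2sq_wt_add_le (hx : WeightedL2 L m x) (hy : WeightedL2 L m y) :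
    L2sq L (wt m (x + y)) ≤ 2 * (L2sq L (wt m x) + L2sq L (wt m y)) := by
  simp only [L2sq]
  rw [← integral_add hx.integrable_sq hy.integrable_sq, ← integral_const_mul]
  refine integral_mono (hx.add hy).integrable_sq
    ((hx.integrable_sq.add hy.integrable_sq).const_mul 2) fun p => ?_
  have distrib : wt m (x + y) p.1 p.2 = wt m x p.1 p.2 + wt m y p.1 p.2 := mul_add _ _ _
  simpa only [distrib] using add_sq_le

theorem L2sq_wt_neg (L : ℝ) (m : ℕ) (x : ℝ → ℝ → ℝ) : L2sq L (wt m (-x)) = L2sq L (wt m x) := by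
  simp only [L2sq, wt, Pi.neg_apply, mul_neg, neg_sq]

theorem WeightedL2.neg (hx : WeightedL2 L m x) : WeightedL2 L m (-x) :=
  (MemLp.neg hx).ae_eq (.of_forall fun _ => (mul_neg _ _).symm)

theorem L2sq_wt_sub_le (hx : WeightedL2 L m x) (hy : WeightedL2 L m y) :
    L2sq L (wt m (x - y)) ≤ 2 * (L2sq L (wt m x) + L2sq L (wt m y)) := by
  rw [sub_eq_add_neg, ← L2sq_wt_neg L m y]
  exact L2sq_wt_add_le hx hy.neg

theorem L2sq_wt_coeff_mul_le (hc : Continuous c) (hB : ∀ s ∈ Icc 0 L, |c s| ≤ B)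
    (hx : WeightedL2 L m x) :
    L2sq L (wt m fun s ψ => c s * x s ψ) ≤ B ^ 2 * L2sq L (wt m x) := by
  simp only [L2sq]
  rw [← integral_const_mul]
  refine setIntegral_mono_on (hx.coeff_mul hc hB).integrable_sq (hx.integrable_sq.const_mul _)
    (measurableSet_halfStrip L) fun p hp => ?_
  rw [← sq_abs, ← sq_abs (wt m x p.1 p.2), ← mul_pow]
  gcongr
  exact abs_wt_coeff_mul_le (hB p.1 (Ioc_subset_Icc_self hp.1)) p.2

theorem L2sq_wt_finsetSum_le {ι : Type*} {S : Finset ι} {z : ι → ℝ → ℝ → ℝ}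
    (hz : ∀ i ∈ S, WeightedL2 L m (z i)) :
    L2sq L (wt m fun s ψ => ∑ i ∈ S, z i s ψ) ≤ S.card * ∑ i ∈ S, L2sq L (wt m (z i)) := by
  simp only [L2sq]
  rw [← integral_finsetSum S fun i hi => (hz i hi).integrable_sq, ← integral_const_mul]
  refine integral_mono (WeightedL2.finsetSum hz).integrable_sq
    ((integrable_finsetSum S fun i hi => (hz i hi).integrable_sq).const_mul _) fun p => ?_
  have distrib : wt m (fun s ψ => ∑ i ∈ S, z i s ψ) p.1 p.2 = ∑ i ∈ S, wt m (z i) p.1 p.2 :=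
    Finset.mul_sum _ _ _
  simpa only [distrib] using sq_sum_le_card_mul_sum_sq

theorem WeightedL2.integrable_mul_mul_weight {V : ℝ → ℝ} (hV : Continuous V)
    (hVB : ∀ ψ > 0, |V ψ| ≤ B * ((1 + ψ) ^ m) ^ 2)
    (hxc : Continuous fun p : ℝ × ℝ => x p.1 p.2) (hyc : Continuous fun p : ℝ × ℝ => y p.1 p.2)
    (hx : WeightedL2 L m x) (hy : WeightedL2 L m y) :
    IntegrableOn (fun p : ℝ × ℝ => x p.1 p.2 * y p.1 p.2 * V p.2) (halfStrip L) := by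
  refine ((MemLp.integrable_mul hx hy).const_mul B).mono
    ((hxc.mul hyc).mul (hV.comp continuous_snd)).aestronglyMeasurable
    ((ae_restrict_mem (measurableSet_halfStrip L)).mono fun p hp => ?_)
  calc ‖x p.1 p.2 * y p.1 p.2 * V p.2‖ = |x p.1 p.2 * y p.1 p.2| * |V p.2| := abs_mul _ _
    _ ≤ |x p.1 p.2 * y p.1 p.2| * (B * ((1 + p.2) ^ m) ^ 2) := by gcongr; exact hVB p.2 hp.2
    _ ≤ |x p.1 p.2 * y p.1 p.2| * (|B| * ((1 + p.2) ^ m) ^ 2) := by gcongr; exact le_abs_self B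
    _ = ‖B * (wt m x p.1 p.2 * wt m y p.1 p.2)‖ := by
      simp only [wt, Real.norm_eq_abs, abs_mul, ← sq_abs ((1 + p.2) ^ m)]
      ring

end WeightedL2

/-! ### The energy weight -/

/-- `W` is a multiplier comparable with `⟨ψ⟩^{2m}`, with derivatives `W'` and `W''`. The one-sided
bound on `W''` by a *small* multiple of `⟨ψ⟩^{2m}` is what lets the energy estimate absorb the term
created by commuting the diffusion with the weight. -/
structure IsEnergyWeight (m : ℕ) (A η : ℝ) (W W' W'' : ℝ → ℝ) : Prop where
  hasDerivAt : ∀ x, HasDerivAt W (W' x) x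
  hasDerivAt_deriv : ∀ x, HasDerivAt W' (W'' x) x
  continuous_deriv_deriv : Continuous W''
  le_weight : ∀ x > 0, ((1 + x) ^ m) ^ 2 ≤ W x
  weight_le : ∀ x > 0, W x ≤ A * ((1 + x) ^ m) ^ 2
  abs_deriv_le : ∀ x > 0, |W' x| ≤ A * ((1 + x) ^ m) ^ 2
  abs_deriv_deriv_le : ∀ x > 0, |W'' x| ≤ A * ((1 + x) ^ m) ^ 2
  deriv_deriv_le : ∀ x > 0, W'' x ≤ η * ((1 + x) ^ m) ^ 2

section IsEnergyWeight

variable {m : ℕ} {A η : ℝ} {W W' W'' : ℝ → ℝ}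

theorem IsEnergyWeight.abs_le (hW : IsEnergyWeight m A η W W' W'') :
    ∀ x > 0, |W x| ≤ A * ((1 + x) ^ m) ^ 2 := fun x hx => by
  rw [abs_of_nonneg ((sq_nonneg _).trans (hW.le_weight x hx))]
  exact hW.weight_le x hx

theorem IsEnergyWeight.continuous (hW : IsEnergyWeight m A η W W' W'') : Continuous W :=
  continuous_iff_continuousAt.2 fun x => (hW.hasDerivAt x).continuousAt

theorem IsEnergyWeight.continuous_deriv (hW : IsEnergyWeight m A η W W' W'') : Continuous W' :=
  continuous_iff_continuousAt.2 fun x => (hW.hasDerivAt_deriv x).continuousAt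

end IsEnergyWeight

theorem exists_pow_le_pow_succ_add_exp_neg {c η : ℝ} (hc : 0 ≤ c) (hη : 0 < η) (n : ℕ) :
    ∃ K ≥ 0, ∀ x > 0, c * (1 + x) ^ n ≤ η * (1 + x) ^ (n + 1) + K * Real.exp (-x) := by
  refine ⟨c * (c / η) ^ n * Real.exp (c / η), by positivity, fun x hx => ?_⟩
  rcases le_total (c / η) (1 + x) with large | small
  · have hcx : c ≤ η * (1 + x) := (div_le_iff₀' hη).1 large
    calc c * (1 + x) ^ n ≤ η * (1 + x) * (1 + x) ^ n := by gcongr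
      _ = η * (1 + x) ^ (n + 1) := by ring
      _ ≤ _ := le_add_of_nonneg_right (by positivity)
  · have one_le_exp : 1 ≤ Real.exp (c / η - x) := Real.one_le_exp (by linarith)
    calc c * (1 + x) ^ n ≤ c * (c / η) ^ n := by gcongr
      _ ≤ c * (c / η) ^ n * Real.exp (c / η - x) :=
        le_mul_of_one_le_right (by positivity) one_le_exp
      _ = c * (c / η) ^ n * Real.exp (c / η) * Real.exp (-x) := by
        rw [mul_assoc _ (Real.exp _), ← Real.exp_add, sub_eq_add_neg]
      _ ≤ _ := le_add_of_nonneg_left (by positivity)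

theorem exists_pow_deriv_deriv_le {η : ℝ} (hη : 0 < η) (M : ℕ) :
    ∃ K ≥ 0, ∀ x > 0, M * (M - 1 : ℕ) * (1 + x) ^ (M - 1 - 1) ≤
      η * (1 + x) ^ M + K * Real.exp (-x) := by
  rcases M.eq_zero_or_pos with rfl | hM
  · exact ⟨0, le_rfl, fun x _ => by simp [hη.le]⟩
  · obtain ⟨K, hK, h⟩ := exists_pow_le_pow_succ_add_exp_neg
      (c := M * (M - 1 : ℕ)) (by positivity) hη (M - 1 - 1)
    refine ⟨K, hK, fun x hx => (h x hx).trans ?_⟩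
    gcongr
    · linarith
    · omega

section ConcaveCorrection

variable (M : ℕ) (K x : ℝ)

theorem hasDerivAt_one_add_pow :
    HasDerivAt (fun x : ℝ => (1 + x) ^ M) (M * (1 + x) ^ (M - 1)) x := by
  simpa using ((hasDerivAt_id x).const_add 1).fun_pow M

theorem hasDerivAt_exp_neg : HasDerivAt (fun x : ℝ => Real.exp (-x)) (-Real.exp (-x)) x := by
  simpa using (hasDerivAt_neg x).exp

theorem hasDerivAt_pow_add_exp :
    HasDerivAt (fun x : ℝ => (1 + x) ^ M + K * (1 - Real.exp (-x)))
      (M * (1 + x) ^ (M - 1) + K * Real.exp (-x)) x := by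
  simpa using (hasDerivAt_one_add_pow M x).fun_add
    (((hasDerivAt_exp_neg x).const_sub 1).const_mul K)

theorem hasDerivAt_deriv_pow_add_exp :
    HasDerivAt (fun x : ℝ => M * (1 + x) ^ (M - 1) + K * Real.exp (-x))
      (M * (M - 1 : ℕ) * (1 + x) ^ (M - 1 - 1) - K * Real.exp (-x)) x := by
  have h := ((hasDerivAt_one_add_pow (M - 1) x).const_mul (M : ℝ)).fun_add
    ((hasDerivAt_exp_neg x).const_mul K)
  exact h.congr_deriv (by ring)

end ConcaveCorrection

theorem exists_isEnergyWeight (m : ℕ) {η : ℝ} (hη : 0 < η) :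
    ∃ A > 0, ∃ W W' W'' : ℝ → ℝ, IsEnergyWeight m A η W W' W'' := by
  obtain ⟨K, hK, small⟩ := exists_pow_deriv_deriv_le hη (m * 2)
  set M := m * 2
  set c : ℝ := M * (M - 1 : ℕ)
  have hc : 0 ≤ c := by positivity
  have hM : (0 : ℝ) ≤ M := M.cast_nonneg
  refine ⟨1 + M + c + K, by positivity, _, _, _, hasDerivAt_pow_add_exp M K,
    hasDerivAt_deriv_pow_add_exp M K, by fun_prop, ?_, ?_, ?_, ?_, ?_⟩
  all_goals
    intro x hx
    have pow_le_top : ∀ j ≤ M, (1 + x) ^ j ≤ (1 + x) ^ M := fun j hj =>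
      pow_le_pow_right₀ (by linarith) hj
    have first := mul_le_mul_of_nonneg_left (pow_le_top (M - 1) (by omega)) hM
    have second := mul_le_mul_of_nonneg_left (pow_le_top (M - 1 - 1) (by omega)) hc
    have corr_le : K * Real.exp (-x) ≤ K :=
      mul_le_of_le_one_right hK (Real.exp_le_one_iff.2 (by linarith))
    have le_corr : K ≤ K * (1 + x) ^ M := le_mul_of_one_le_right hK (one_le_pow₀ (by linarith))
    have corr_nonneg : 0 ≤ K * Real.exp (-x) := by positivity
    have first_nonneg : 0 ≤ M * (1 + x) ^ (M - 1) := by positivity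
    have second_nonneg : 0 ≤ c * (1 + x) ^ (M - 1 - 1) := by positivity
    have top_nonneg : 0 ≤ (1 + x) ^ M := by positivity
    rw [← pow_mul]
  · linarith
  · linarith
  · exact abs_le.2 ⟨by linarith, by linarith⟩
  · exact abs_le.2 ⟨by linarith, by linarith⟩
  · linarith [small x hx]

/-! ### The divergence theorem on the half-strip -/

theorem hasDerivAt_intervalIntegral_right {a b : ℝ} {H H' : ℝ → ℝ → ℝ}
    (hHc : Continuous fun p : ℝ × ℝ => H p.1 p.2) (hH'c : Continuous fun p : ℝ × ℝ => H' p.1 p.2)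
    (hH : ∀ s ψ, HasDerivAt (H s) (H' s ψ) ψ) (ψ : ℝ) :
    HasDerivAt (fun ψ => ∫ s in a..b, H s ψ) (∫ s in a..b, H' s ψ) ψ := by
  obtain ⟨C, hC⟩ := (isCompact_uIcc.prod (isCompact_closedBall ψ 1)).exists_bound_of_continuousOn
    (hH'c.continuousOn (s := uIcc a b ×ˢ Metric.closedBall ψ 1))
  refine (intervalIntegral.hasDerivAt_integral_of_dominated_loc_of_deriv_le
    (F := fun ψ s => H s ψ) (F' := fun ψ s => H' s ψ) (bound := fun _ => C)
    (Metric.closedBall_mem_nhds ψ one_pos)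
    (.of_forall fun x => (hHc.comp (.prodMk_left x)).aestronglyMeasurable)
    ((hHc.comp (.prodMk_left ψ)).intervalIntegrable a b)
    (hH'c.comp (.prodMk_left ψ)).aestronglyMeasurable
    (.of_forall fun s hs x hx => hC (s, x) ⟨uIoc_subset_uIcc hs, hx⟩)
    intervalIntegrable_const (.of_forall fun s _ x _ => hH s x)).2

theorem integral_halfStrip_divergence_eq_zero {L : ℝ} (hL : 0 ≤ L) {A A' H H' : ℝ → ℝ → ℝ}
    (hA : ∀ s ψ, HasDerivAt (fun s' => A s' ψ) (A' s ψ) s)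
    (hH : ∀ s ψ, HasDerivAt (H s) (H' s ψ) ψ)
    (hA'c : Continuous fun p : ℝ × ℝ => A' p.1 p.2) (hHc : Continuous fun p : ℝ × ℝ => H p.1 p.2)
    (hH'c : Continuous fun p : ℝ × ℝ => H' p.1 p.2)
    (hAper : ∀ ψ, A L ψ = A 0 ψ) (hH0 : ∀ s, H s 0 = 0)
    (hHi : IntegrableOn (fun p : ℝ × ℝ => H p.1 p.2) (halfStrip L))
    (hdiv : IntegrableOn (fun p : ℝ × ℝ => A' p.1 p.2 + H' p.1 p.2) (halfStrip L)) :
    ∫ p in halfStrip L, (A' p.1 p.2 + H' p.1 p.2) = 0 := by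
  have slice_integral : ∀ ψ, ∫ s in Ioc 0 L, (A' s ψ + H' s ψ) = ∫ s in (0 : ℝ)..L, H' s ψ := by
    intro ψ
    have hA'i := (hA'c.comp (.prodMk_left ψ)).intervalIntegrable 0 L (μ := volume)
    have hH'i := (hH'c.comp (.prodMk_left ψ)).intervalIntegrable 0 L (μ := volume)
    rw [← intervalIntegral.integral_of_le hL]
    have split := intervalIntegral.integral_add hA'i hH'i
    have circulation := intervalIntegral.integral_eq_sub_of_hasDerivAt (fun s _ => hA s ψ) hA'i
    simp only [Function.comp_def] at split circulation
    rw [split, circulation, hAper, sub_self, zero_add]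
  unfold IntegrableOn at hHi hdiv
  rw [Measure.volume_eq_prod, ← Measure.prod_restrict] at hHi hdiv ⊢
  rw [integral_prod_symm _ hdiv]
  have flux_integrable := hHi.integral_prod_right
  have div_integrable := hdiv.integral_prod_right
  simp only [slice_integral, ← intervalIntegral.integral_of_le hL]
    at flux_integrable div_integrable ⊢
  have deriv_flux := hasDerivAt_intervalIntegral_right (a := 0) (b := L) hHc hH'c hH
  have flux_tendsto := tendsto_zero_of_hasDerivAt_of_integrableOn_Ioi
    (fun ψ _ => deriv_flux ψ) div_integrable flux_integrable
  rw [integral_Ioi_of_hasDerivAt_of_tendsto (deriv_flux 0).continuousAt.continuousWithinAt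
    (fun ψ _ => deriv_flux ψ) div_integrable flux_tendsto]
  simp only [hH0, intervalIntegral.integral_zero, sub_zero]

/-! ### The weighted energy estimate -/

/-- `u` is a smooth, tangentially periodic solution of `∂_s u = a ∂_ψ² u + ∂_ψ g + f` on
`𝕋_L × (0, ∞)`, with `u`, `∂_ψ u`, `f` and `g` square integrable against `⟨ψ⟩^{2m}`. -/
structure IsWeightedHeatSolution (L : ℝ) (m : ℕ) (a : ℝ → ℝ) (u f g : ℝ → ℝ → ℝ) : Prop where
  smooth : Smooth2 u
  smooth_flux : Smooth2 g
  continuous_source : Continuous fun p : ℝ × ℝ => f p.1 p.2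
  periodic : PeriodicS L u
  equation : ∀ s, ∀ ψ > 0, dS 1 u s ψ = a s * dPsi 2 u s ψ + dPsi 1 g s ψ + f s ψ
  weightedL2 : WeightedL2 L m u
  weightedL2_dPsi : WeightedL2 L m (dPsi 1 u)
  weightedL2_source : WeightedL2 L m f
  weightedL2_flux : WeightedL2 L m g

/-- The normal flux of the energy `-u² W / 2`. -/
noncomputable def energyFlux (a W W' : ℝ → ℝ) (u g : ℝ → ℝ → ℝ) : ℝ → ℝ → ℝ := fun s ψ =>
  (a s * dPsi 1 u s ψ + g s ψ) * u s ψ * W ψ - a s * u s ψ ^ 2 * W' ψ / 2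

/-- The `ψ`-derivative of `energyFlux`, see `hasDerivAt_energyFlux`. -/
noncomputable def energyFluxDeriv (a W W' W'' : ℝ → ℝ) (u g : ℝ → ℝ → ℝ) : ℝ → ℝ → ℝ := fun s ψ =>
  (a s * dPsi 2 u s ψ + dPsi 1 g s ψ) * u s ψ * W ψ
    + (a s * dPsi 1 u s ψ + g s ψ) * (dPsi 1 u s ψ * W ψ + u s ψ * W' ψ)
    - a s * (u s ψ * dPsi 1 u s ψ * W' ψ + u s ψ ^ 2 * W'' ψ / 2)

/-- The density left after integrating `∂_s u = a ∂_ψ² u + ∂_ψ g + f` by parts against `u W`. -/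
noncomputable def energyDensity (a W W' W'' : ℝ → ℝ) (u f g : ℝ → ℝ → ℝ) : ℝ → ℝ → ℝ := fun s ψ =>
  a s * dPsi 1 u s ψ ^ 2 * W ψ - f s ψ * u s ψ * W ψ + g s ψ * dPsi 1 u s ψ * W ψ
    + g s ψ * u s ψ * W' ψ - a s * u s ψ ^ 2 * W'' ψ / 2

theorem hasDerivAt_energyFlux {a W W' W'' : ℝ → ℝ} {u g : ℝ → ℝ → ℝ}
    (hW : ∀ x, HasDerivAt W (W' x) x) (hW' : ∀ x, HasDerivAt W' (W'' x) x)
    (hu : Smooth2 u) (hg : Smooth2 g) (s ψ : ℝ) :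
    HasDerivAt (energyFlux a W W' u g s) (energyFluxDeriv a W W' W'' u g s ψ) ψ := by
  have du := hu.hasDerivAt_dPsi s ψ
  have ddu := (hu.smooth2_dPsi 1).hasDerivAt_dPsi s ψ
  rw [← dPsi_two] at ddu
  have main := (((ddu.const_mul (a s)).fun_add (hg.hasDerivAt_dPsi s ψ)).fun_mul du).fun_mul (hW ψ)
  have corr := (((du.fun_pow 2).const_mul (a s)).fun_mul (hW' ψ)).div_const 2
  refine (main.fun_sub corr).congr_deriv ?_
  simp only [energyFluxDeriv]
  push_cast
  ring

theorem mul_mul_le_of_abs_le {h v w X A ε : ℝ} (hε : 0 < ε) (hw : 0 ≤ w) (hX : |X| ≤ A * w) :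
    h * v * X ≤ ε * (w * v ^ 2) + A ^ 2 / (4 * ε) * (w * h ^ 2) := by
  have square : ε * v ^ 2 + A ^ 2 / (4 * ε) * h ^ 2 - A * |h| * |v| =
      (2 * ε * |v| - A * |h|) ^ 2 / (4 * ε) := by
    rw [← sq_abs v, ← sq_abs h]
    field_simp
    ring
  have young : A * |h| * |v| ≤ ε * v ^ 2 + A ^ 2 / (4 * ε) * h ^ 2 :=
    sub_nonneg.1 (square ▸ by positivity)
  calc h * v * X ≤ |h * v| * |X| := (le_abs_self _).trans (abs_mul _ _).le
    _ ≤ |h| * |v| * (A * w) := by rw [abs_mul]; gcongr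
    _ = w * (A * |h| * |v|) := by ring
    _ ≤ w * (ε * v ^ 2 + A ^ 2 / (4 * ε) * h ^ 2) := by gcongr
    _ = _ := by ring

section EnergyEstimate

variable {L A c₀ c₁ η : ℝ} {m : ℕ} {a W W' W'' : ℝ → ℝ} {u f g : ℝ → ℝ → ℝ}

theorem sq_wt_le_energyDensity (hc₀ : 0 < c₀) (hc₁ : 0 < c₁) (hη : 0 < η)
    (hW : IsEnergyWeight m A (c₀ * η / (2 * c₁)) W W' W'') {s ψ : ℝ} (hψ : 0 < ψ)
    (ha₀ : c₀ ≤ a s) (ha₁ : a s ≤ c₁) :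
    c₀ / 2 * wt m (dPsi 1 u) s ψ ^ 2 ≤ energyDensity a W W' W'' u f g s ψ
      + (2 * A ^ 2 / (c₀ * η) + A ^ 2 / (2 * c₀)) * (wt m f s ψ ^ 2 + wt m g s ψ ^ 2)
      + c₀ * η / 2 * wt m u s ψ ^ 2 := by
  have hw : 0 ≤ ((1 + ψ) ^ m) ^ 2 := sq_nonneg _
  have le_W := hW.le_weight ψ hψ
  have W_le := hW.abs_le ψ hψ
  have W'_le := hW.abs_deriv_le ψ hψ
  have W''_le := hW.deriv_deriv_le ψ hψ
  simp only [wt, mul_pow, energyDensity]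
  generalize ((1 + ψ) ^ m) ^ 2 = w at *
  generalize dPsi 1 u s ψ = u'
  have source := mul_mul_le_of_abs_le (h := f s ψ) (v := u s ψ) (ε := c₀ * η / 8)
    (by positivity) hw W_le
  have flux := mul_mul_le_of_abs_le (h := -g s ψ) (v := u s ψ) (ε := c₀ * η / 8)
    (by positivity) hw W'_le
  have flux' := mul_mul_le_of_abs_le (h := -g s ψ) (v := u') (ε := c₀ / 2)
    (by positivity) hw W_le
  have a_pos : 0 < a s := hc₀.trans_le ha₀
  have diffusion : c₀ * (w * u' ^ 2) ≤ a s * u' ^ 2 * W ψ := by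
    calc c₀ * (w * u' ^ 2) = c₀ * u' ^ 2 * w := by ring
      _ ≤ a s * u' ^ 2 * W ψ := by gcongr
  have commutator : a s * u s ψ ^ 2 * W'' ψ / 2 ≤ c₀ * η / 4 * (w * u s ψ ^ 2) := by
    calc a s * u s ψ ^ 2 * W'' ψ / 2
        ≤ a s * u s ψ ^ 2 * (c₀ * η / (2 * c₁) * w) / 2 := by gcongr
      _ ≤ c₁ * u s ψ ^ 2 * (c₀ * η / (2 * c₁) * w) / 2 := by gcongr
      _ = c₀ * η / 4 * (w * u s ψ ^ 2) := by field_simp; ring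
  have spare : 0 ≤ A ^ 2 / (2 * c₀) * (w * f s ψ ^ 2) := by positivity
  have const : A ^ 2 / (4 * (c₀ * η / 8)) = 2 * A ^ 2 / (c₀ * η) := by field_simp; ring
  have const' : A ^ 2 / (4 * (c₀ / 2)) = A ^ 2 / (2 * c₀) := by field_simp; ring
  rw [const] at source flux
  rw [const'] at flux'
  linarith

namespace IsWeightedHeatSolution

theorem integrable_energyFlux (hu : IsWeightedHeatSolution L m a u f g) (ha : Continuous a)
    (ha₁ : ∀ s ∈ Icc 0 L, |a s| ≤ c₁) (hW : IsEnergyWeight m A η W W' W'') :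
    IntegrableOn (fun p : ℝ × ℝ => energyFlux a W W' u g p.1 p.2) (halfStrip L) := by
  have ha' : Continuous fun p : ℝ × ℝ => a p.1 := ha.comp continuous_fst
  have total := ((hu.weightedL2_dPsi.coeff_mul ha ha₁).add hu.weightedL2_flux
    ).integrable_mul_mul_weight hW.continuous hW.abs_le
    ((ha'.mul (hu.smooth.smooth2_dPsi 1).continuous).add hu.smooth_flux.continuous)
    hu.smooth.continuous hu.weightedL2
  have corr := (hu.weightedL2.coeff_mul ha ha₁).integrable_mul_mul_weight hW.continuous_deriv
    hW.abs_deriv_le (ha'.mul hu.smooth.continuous) hu.smooth.continuous hu.weightedL2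
  refine (total.sub (corr.div_const 2)).congr (.of_forall fun p => ?_)
  simp only [energyFlux, Pi.add_apply, Pi.sub_apply]
  ring

theorem integrable_energyDensity (hu : IsWeightedHeatSolution L m a u f g) (ha : Continuous a)
    (ha₁ : ∀ s ∈ Icc 0 L, |a s| ≤ c₁) (hW : IsEnergyWeight m A η W W' W'') :
    IntegrableOn (fun p : ℝ × ℝ => energyDensity a W W' W'' u f g p.1 p.2) (halfStrip L) := by
  have ha' : Continuous fun p : ℝ × ℝ => a p.1 := ha.comp continuous_fst
  have hdu := (hu.smooth.smooth2_dPsi 1).continuous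
  have diffusion := (hu.weightedL2_dPsi.coeff_mul ha ha₁).integrable_mul_mul_weight hW.continuous
    hW.abs_le (ha'.mul hdu) hdu hu.weightedL2_dPsi
  have source := hu.weightedL2_source.integrable_mul_mul_weight hW.continuous hW.abs_le
    hu.continuous_source hu.smooth.continuous hu.weightedL2
  have flux := hu.weightedL2_flux.integrable_mul_mul_weight hW.continuous hW.abs_le
    hu.smooth_flux.continuous hdu hu.weightedL2_dPsi
  have flux' := hu.weightedL2_flux.integrable_mul_mul_weight hW.continuous_deriv hW.abs_deriv_le
    hu.smooth_flux.continuous hu.smooth.continuous hu.weightedL2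
  have corr := (hu.weightedL2.coeff_mul ha ha₁).integrable_mul_mul_weight
    hW.continuous_deriv_deriv hW.abs_deriv_deriv_le (ha'.mul hu.smooth.continuous)
    hu.smooth.continuous hu.weightedL2
  refine ((((diffusion.sub source).add flux).add flux').sub (corr.div_const 2)).congr
    (.of_forall fun p => ?_)
  simp only [energyDensity, Pi.add_apply, Pi.sub_apply]
  ring

theorem energyDensity_eq (hu : IsWeightedHeatSolution L m a u f g) (s : ℝ) {ψ : ℝ} (hψ : 0 < ψ) :
    energyDensity a W W' W'' u f g s ψ =
      -(u s ψ * dS 1 u s ψ * W ψ) + energyFluxDeriv a W W' W'' u g s ψ := by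
  rw [hu.equation s ψ hψ, energyDensity, energyFluxDeriv]
  ring

theorem integral_energyDensity (hL : 0 ≤ L) (hu : IsWeightedHeatSolution L m a u f g)
    (hu0 : ∀ s, u s 0 = 0) (ha : Continuous a) (ha₁ : ∀ s ∈ Icc 0 L, |a s| ≤ c₁)
    (hW : IsEnergyWeight m A η W W' W'') :
    ∫ p in halfStrip L, energyDensity a W W' W'' u f g p.1 p.2 = 0 := by
  have cW := hW.continuous
  have cW' := hW.continuous_deriv
  have cW'' := hW.continuous_deriv_deriv
  have cu := hu.smooth.continuous
  have cus := (hu.smooth.smooth2_dS 1).continuous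
  have cuψ := (hu.smooth.smooth2_dPsi 1).continuous
  have cuψψ := (hu.smooth.smooth2_dPsi 2).continuous
  have cg := hu.smooth_flux.continuous
  have cgψ := (hu.smooth_flux.smooth2_dPsi 1).continuous
  have energy_deriv (s ψ : ℝ) : HasDerivAt (fun s' => -(u s' ψ ^ 2 * W ψ / 2))
      (-(u s ψ * dS 1 u s ψ * W ψ)) s :=
    ((((hu.smooth.hasDerivAt_dS s ψ).fun_pow 2).mul_const (W ψ)).div_const 2).fun_neg.congr_deriv
      (by push_cast; ring)
  have density_eq (p : ℝ × ℝ) (hp : p ∈ halfStrip L) :=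
    hu.energyDensity_eq (W := W) (W' := W') (W'' := W'') p.1 hp.2
  rw [setIntegral_congr_fun (measurableSet_halfStrip L) density_eq]
  refine integral_halfStrip_divergence_eq_zero hL energy_deriv
    (hasDerivAt_energyFlux hW.hasDerivAt hW.hasDerivAt_deriv hu.smooth hu.smooth_flux)
    (by fun_prop) (by unfold energyFlux; fun_prop) (by unfold energyFluxDeriv; fun_prop)
    (fun ψ => ?_) (fun s => ?_) (hu.integrable_energyFlux ha ha₁ hW)
    ((hu.integrable_energyDensity ha ha₁ hW).congr_fun density_eq (measurableSet_halfStrip L))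
  · have wrap : u L ψ = u 0 ψ := by simpa using hu.periodic ψ 0
    rw [wrap]
  · simp [energyFlux, hu0]

end IsWeightedHeatSolution

end EnergyEstimate

theorem exists_pos_bounds_of_continuousOn_Icc {a : ℝ → ℝ} {l r : ℝ} (hlr : l ≤ r)
    (ha : ContinuousOn a (Icc l r)) (hpos : ∀ s ∈ Icc l r, 0 < a s) :
    ∃ c₀ > 0, ∃ c₁ > 0, ∀ s ∈ Icc l r, c₀ ≤ a s ∧ a s ≤ c₁ := by
  obtain ⟨smin, hmin, le_a⟩ := isCompact_Icc.exists_isMinOn (nonempty_Icc.2 hlr) ha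
  obtain ⟨smax, hmax, a_le⟩ := isCompact_Icc.exists_isMaxOn (nonempty_Icc.2 hlr) ha
  exact ⟨a smin, hpos _ hmin, a smax, hpos _ hmax, fun s hs => ⟨le_a hs, a_le hs⟩⟩

theorem exists_L2sq_dPsi_le_of_trace_eq_zero {L : ℝ} (hL : 0 ≤ L) (m : ℕ) {a : ℝ → ℝ}
    (ha : Continuous a) (hpos : ∀ s ∈ Icc 0 L, 0 < a s) {η : ℝ} (hη : 0 < η) :
    ∃ C > 0, ∀ u f g : ℝ → ℝ → ℝ, IsWeightedHeatSolution L m a u f g → (∀ s, u s 0 = 0) →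
      L2sq L (wt m (dPsi 1 u)) ≤
        C * (L2sq L (wt m f) + L2sq L (wt m g)) + η * L2sq L (wt m u) := by
  obtain ⟨c₀, hc₀, c₁, hc₁, bounds⟩ :=
    exists_pos_bounds_of_continuousOn_Icc hL ha.continuousOn hpos
  obtain ⟨A, hA, W, W', W'', hW⟩ := exists_isEnergyWeight m (η := c₀ * η / (2 * c₁)) (by positivity)
  set K := 2 * A ^ 2 / (c₀ * η) + A ^ 2 / (2 * c₀)
  refine ⟨2 / c₀ * K, by positivity, fun u f g hu hu0 => ?_⟩
  have abs_a_le : ∀ s ∈ Icc 0 L, |a s| ≤ c₁ := fun s hs => by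
    rw [abs_of_pos (hpos s hs)]
    exact (bounds s hs).2
  have density := hu.integrable_energyDensity ha abs_a_le hW
  have data := (hu.weightedL2_source.integrable_sq.add hu.weightedL2_flux.integrable_sq).const_mul K
  have absorbed := hu.weightedL2.integrable_sq.const_mul (c₀ * η / 2)
  have pointwise (p : ℝ × ℝ) (hp : p ∈ halfStrip L) :=
    sq_wt_le_energyDensity (u := u) (f := f) (g := g) hc₀ hc₁ hη hW hp.2
      (bounds p.1 (Ioc_subset_Icc_self hp.1)).1 (bounds p.1 (Ioc_subset_Icc_self hp.1)).2
  have integrated := setIntegral_mono_on (hu.weightedL2_dPsi.integrable_sq.const_mul (c₀ / 2))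
    ((density.add data).add absorbed) (measurableSet_halfStrip L) pointwise
  rw [integral_const_mul, integral_add' (density.add data) absorbed, integral_add' density data,
    integral_const_mul, integral_const_mul, hu.integral_energyDensity hL hu0 ha abs_a_le hW,
    integral_add' hu.weightedL2_source.integrable_sq hu.weightedL2_flux.integrable_sq] at integrated
  simp only [L2sq]
  field_simp at integrated ⊢
  linarith

/-! ### Lifting the boundary value -/

/-- The lift of a boundary value `β` to a function on `𝕋_L × ℝ₊` decaying exponentially in `ψ`. -/
noncomputable def expLift (β : ℝ → ℝ) : ℝ → ℝ → ℝ := fun s ψ => Real.exp (-ψ) * β s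

section ExpLift

variable {β γ : ℝ → ℝ}

theorem expLift_zero_right (β : ℝ → ℝ) (s : ℝ) : expLift β s 0 = β s := by
  simp [expLift]

theorem continuous_expLift (hβ : Continuous β) :
    Continuous fun p : ℝ × ℝ => expLift β p.1 p.2 := by
  unfold expLift
  fun_prop

theorem smooth2_expLift (hβ : ContDiff ℝ ∞ β) : Smooth2 (expLift β) :=
  (contDiff_snd.neg.exp).mul (hβ.comp contDiff_fst)

theorem periodicS_expLift {L : ℝ} (hβ : Periodic β L) : PeriodicS L (expLift β) := fun ψ s => by
  simp only [expLift, hβ s]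

theorem dS_one_expLift (hβ : Differentiable ℝ β) : dS 1 (expLift β) = expLift (deriv β) := by
  funext s ψ
  simp only [dS, iteratedDeriv_one]
  exact ((hβ s).hasDerivAt.const_mul _).deriv

theorem dPsi_one_expLift (β : ℝ → ℝ) : dPsi 1 (expLift β) = -expLift β := by
  funext s ψ
  simp only [dPsi, iteratedDeriv_one]
  exact ((hasDerivAt_exp_neg ψ).mul_const (β s)).deriv.trans (neg_mul _ _)

theorem dPsi_two_expLift (β : ℝ → ℝ) : dPsi 2 (expLift β) = expLift β := by
  funext s ψ
  rw [dPsi_two, dPsi_one_expLift]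
  simp only [dPsi, iteratedDeriv_one]
  exact ((hasDerivAt_exp_neg ψ).mul_const (β s)).fun_neg.deriv.trans (by simp [expLift])

theorem integrableOn_sq_pow_mul_exp_neg (m : ℕ) :
    IntegrableOn (fun ψ : ℝ => ((1 + ψ) ^ m * Real.exp (-ψ)) ^ 2) (Ioi 0) := by
  refine integrable_of_isBigO_exp_neg one_pos (by fun_prop) ?_
  have pow_isBigO : (fun ψ : ℝ => (1 + ψ) ^ (2 * m)) =O[atTop] fun ψ => Real.exp (1 + ψ) :=
    ((Real.isLittleO_pow_exp_atTop (n := 2 * m)).comp_tendsto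
      (tendsto_atTop_add_const_left _ 1 tendsto_id)).isBigO
  have exp_split : (fun ψ : ℝ => Real.exp (1 + ψ) * Real.exp (-2 * ψ)) =
      fun ψ => Real.exp 1 * Real.exp (-1 * ψ) := by
    funext ψ
    rw [← Real.exp_add, ← Real.exp_add]
    ring_nf
  have product := pow_isBigO.mul (Asymptotics.isBigO_refl (fun ψ : ℝ => Real.exp (-2 * ψ)) atTop)
  rw [exp_split] at product
  refine (product.trans (Asymptotics.isBigO_const_mul_self _ _ _)).congr_left fun ψ => ?_
  rw [mul_pow, ← pow_mul, mul_comm m 2, ← Real.exp_nat_mul]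
  push_cast
  ring_nf

theorem wt_expLift (m : ℕ) (β : ℝ → ℝ) :
    wt m (expLift β) = fun s ψ => β s * ((1 + ψ) ^ m * Real.exp (-ψ)) := by
  funext s ψ
  simp only [wt, expLift]
  ring

theorem weightedL2_expLift (L : ℝ) (m : ℕ) (hβ : Continuous β) :
    WeightedL2 L m (expLift β) := by
  refine FiniteL2.weightedL2 ?_ (continuous_expLift hβ)
  have tangential : IntegrableOn (fun s => β s ^ 2) (Ioc 0 L) :=
    (hβ.pow 2).integrableOn_Ioc
  simp only [FiniteL2, IntegrableOn, wt_expLift, mul_pow (β _)]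
  rw [Measure.volume_eq_prod, ← Measure.prod_restrict]
  exact tangential.mul_prod (integrableOn_sq_pow_mul_exp_neg m)

theorem exists_L2sq_wt_expLift_le {L : ℝ} (hL : 0 ≤ L) (m : ℕ) :
    ∃ C > 0, ∀ β : ℝ → ℝ, L2sq L (wt m (expLift β)) ≤ C * ∫ s in (0 : ℝ)..L, β s ^ 2 := by
  set I : ℝ := ∫ ψ in Ioi 0, ((1 + ψ) ^ m * Real.exp (-ψ)) ^ 2
  have hI : 0 ≤ I := integral_nonneg fun _ => sq_nonneg _
  refine ⟨I + 1, add_pos_of_nonneg_of_pos hI one_pos, fun β => ?_⟩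
  rw [wt_expLift, L2sq_eq_intervalIntegral_sq_mul hL β, mul_comm]
  have hβ : 0 ≤ ∫ s in (0 : ℝ)..L, β s ^ 2 :=
    intervalIntegral.integral_nonneg hL fun _ _ => sq_nonneg _
  gcongr
  exact le_add_of_nonneg_right zero_le_one

end ExpLift

theorem IsWeightedHeatSolution.sub_expLift {L : ℝ} {m : ℕ} {a β : ℝ → ℝ} {u f g : ℝ → ℝ → ℝ}
    (hu : IsWeightedHeatSolution L m a u f g) (ha : Continuous a) (hβ : ContDiff ℝ ∞ β)
    (hβper : Periodic β L) :
    IsWeightedHeatSolution L m a (u - expLift β) (f - expLift (deriv β - a * β)) g where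
  smooth := hu.smooth.sub (smooth2_expLift hβ)
  smooth_flux := hu.smooth_flux
  continuous_source := hu.continuous_source.sub
    (continuous_expLift ((hβ.continuous_deriv (by simp)).sub (ha.mul hβ.continuous)))
  periodic ψ := (hu.periodic ψ).sub (periodicS_expLift hβper ψ)
  equation s ψ hψ := by
    rw [hu.smooth.dS_sub (smooth2_expLift hβ), hu.smooth.dPsi_sub (smooth2_expLift hβ),
      dS_one_expLift (hβ.differentiable (by simp)), dPsi_two_expLift]
    simp only [Pi.sub_apply, Pi.mul_apply, expLift, hu.equation s ψ hψ]
    ring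
  weightedL2 := hu.weightedL2.sub (weightedL2_expLift L m hβ.continuous)
  weightedL2_dPsi := by
    rw [hu.smooth.dPsi_sub (smooth2_expLift hβ), dPsi_one_expLift]
    exact hu.weightedL2_dPsi.sub (weightedL2_expLift L m hβ.continuous).neg
  weightedL2_source := hu.weightedL2_source.sub (weightedL2_expLift L m
    ((hβ.continuous_deriv (by simp)).sub (ha.mul hβ.continuous)))
  weightedL2_flux := hu.weightedL2_flux

theorem intervalIntegral_sub_mul_sq_le {L B : ℝ} {a x y : ℝ → ℝ} (hL : 0 ≤ L)
    (ha : Continuous a) (hB : ∀ s ∈ Icc 0 L, |a s| ≤ B) (hx : Continuous x) (hy : Continuous y) :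
    ∫ s in (0 : ℝ)..L, (x - a * y) s ^ 2 ≤
      2 * ((∫ s in (0 : ℝ)..L, x s ^ 2) + B ^ 2 * ∫ s in (0 : ℝ)..L, y s ^ 2) := by
  have hx2 : IntervalIntegrable (fun s => x s ^ 2) volume 0 L :=
    (hx.pow 2).intervalIntegrable 0 L
  have hy2 : IntervalIntegrable (fun s => B ^ 2 * y s ^ 2) volume 0 L :=
    ((hy.pow 2).const_mul _).intervalIntegrable 0 L
  rw [← intervalIntegral.integral_const_mul, ← intervalIntegral.integral_add hx2 hy2,
    ← intervalIntegral.integral_const_mul]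
  refine intervalIntegral.integral_mono_on hL
    (((hx.sub (ha.mul hy)).pow 2).intervalIntegrable 0 L) ((hx2.add hy2).const_mul 2) fun s hs => ?_
  calc (x s - a s * y s) ^ 2 ≤ 2 * (x s ^ 2 + (-(a s * y s)) ^ 2) := by
        rw [sub_eq_add_neg]; exact add_sq_le
    _ = 2 * (x s ^ 2 + |a s| ^ 2 * y s ^ 2) := by rw [neg_sq, mul_pow, sq_abs]
    _ ≤ 2 * (x s ^ 2 + B ^ 2 * y s ^ 2) := by gcongr; exact hB s hs

theorem exists_L2sq_wt_sub_expLift_le {L : ℝ} (hL : 0 ≤ L) (m : ℕ) {a : ℝ → ℝ}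
    (ha : Continuous a) :
    ∃ C > 0, ∀ (f : ℝ → ℝ → ℝ) (β : ℝ → ℝ), WeightedL2 L m f → ContDiff ℝ 1 β →
      L2sq L (wt m (f - expLift (deriv β - a * β))) ≤ C * (L2sq L (wt m f)
        + (∫ s in (0 : ℝ)..L, β s ^ 2) + ∫ s in (0 : ℝ)..L, deriv β s ^ 2) := by
  obtain ⟨E, hE, lift_le⟩ := exists_L2sq_wt_expLift_le hL m
  obtain ⟨B, hB⟩ := isCompact_Icc.exists_bound_of_continuousOn (ha.continuousOn (s := Icc 0 L))
  refine ⟨2 + 4 * E * (1 + B ^ 2), by positivity, fun f β hf hβ => ?_⟩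
  have hβ' : Continuous (deriv β) := hβ.continuous_deriv le_rfl
  have residual := intervalIntegral_sub_mul_sq_le hL ha hB hβ' hβ.continuous
  have hNf := L2sq_nonneg L (wt m f)
  have hI : 0 ≤ ∫ s in (0 : ℝ)..L, β s ^ 2 :=
    intervalIntegral.integral_nonneg hL fun _ _ => sq_nonneg _
  have hI' : 0 ≤ ∫ s in (0 : ℝ)..L, deriv β s ^ 2 :=
    intervalIntegral.integral_nonneg hL fun _ _ => sq_nonneg _
  set Nf := L2sq L (wt m f)
  set I := ∫ s in (0 : ℝ)..L, β s ^ 2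
  set I' := ∫ s in (0 : ℝ)..L, deriv β s ^ 2
  have slack : 0 ≤ 4 * E * (1 + B ^ 2) * Nf + (2 + 4 * E) * I + (2 + 4 * E * B ^ 2) * I' := by
    positivity
  calc L2sq L (wt m (f - expLift (deriv β - a * β)))
      ≤ 2 * (Nf + L2sq L (wt m (expLift (deriv β - a * β)))) :=
        L2sq_wt_sub_le hf (weightedL2_expLift L m (hβ'.sub (ha.mul hβ.continuous)))
    _ ≤ 2 * (Nf + E * (2 * (I' + B ^ 2 * I))) := by
        gcongr
        exact (lift_le _).trans (by gcongr)
    _ ≤ (2 + 4 * E * (1 + B ^ 2)) * (Nf + I + I') := by linarith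

theorem exists_L2sq_dPsi_le {L : ℝ} (hL : 0 ≤ L) (m : ℕ) {a : ℝ → ℝ}
    (ha : Continuous a) (hpos : ∀ s ∈ Icc 0 L, 0 < a s) {η : ℝ} (hη : 0 < η) :
    ∃ C > 0, ∀ u f g : ℝ → ℝ → ℝ, IsWeightedHeatSolution L m a u f g →
      L2sq L (wt m (dPsi 1 u)) ≤ C * (L2sq L (wt m f) + L2sq L (wt m g)
        + (∫ s in (0 : ℝ)..L, u s 0 ^ 2) + ∫ s in (0 : ℝ)..L, deriv (fun s => u s 0) s ^ 2)
        + η * L2sq L (wt m u) := by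
  obtain ⟨A, hA, trace_zero⟩ := exists_L2sq_dPsi_le_of_trace_eq_zero hL m ha hpos
    (show 0 < η / 4 by positivity)
  obtain ⟨D, hD, source_le⟩ := exists_L2sq_wt_sub_expLift_le hL m ha
  obtain ⟨E, hE, lift_le⟩ := exists_L2sq_wt_expLift_le hL m
  refine ⟨2 * A * (D + 1) + (η + 2) * E, by positivity, fun u f g hu => ?_⟩
  set β : ℝ → ℝ := fun s => u s 0
  have hβ : ContDiff ℝ ∞ β := hu.smooth.contDiff_left 0
  have hv := hu.sub_expLift ha hβ (hu.periodic 0)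
  have hlift : WeightedL2 L m (expLift β) := weightedL2_expLift L m hβ.continuous
  have split : dPsi 1 u = dPsi 1 (u - expLift β) - expLift β := by
    rw [hu.smooth.dPsi_sub (smooth2_expLift hβ), dPsi_one_expLift, sub_neg_eq_add,
      add_sub_cancel_right]
  have hNf := L2sq_nonneg L (wt m f)
  have hNg := L2sq_nonneg L (wt m g)
  have hI : 0 ≤ ∫ s in (0 : ℝ)..L, β s ^ 2 :=
    intervalIntegral.integral_nonneg hL fun _ _ => sq_nonneg _
  have hI' : 0 ≤ ∫ s in (0 : ℝ)..L, deriv β s ^ 2 :=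
    intervalIntegral.integral_nonneg hL fun _ _ => sq_nonneg _
  set Nf := L2sq L (wt m f)
  set Ng := L2sq L (wt m g)
  set I := ∫ s in (0 : ℝ)..L, β s ^ 2
  set I' := ∫ s in (0 : ℝ)..L, deriv β s ^ 2
  have slack : 0 ≤ (2 * A + (η + 2) * E) * (Nf + I') + 2 * A * I
      + (2 * A * D + (η + 2) * E) * Ng := by positivity
  calc L2sq L (wt m (dPsi 1 u))
      ≤ 2 * (L2sq L (wt m (dPsi 1 (u - expLift β))) + L2sq L (wt m (expLift β))) := by
        rw [split]; exact L2sq_wt_sub_le hv.weightedL2_dPsi hlift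
    _ ≤ 2 * (A * (D * (Nf + I + I') + Ng) + η / 4 * (2 * (L2sq L (wt m u) + E * I)) + E * I) := by
        gcongr
        · refine (trace_zero _ _ _ hv fun s => by simp [β, expLift_zero_right]).trans ?_
          gcongr
          · exact source_le f β hu.weightedL2_source (hβ.of_le (by exact_mod_cast le_top))
          · exact (L2sq_wt_sub_le hu.weightedL2 hlift).trans (by gcongr; exact lift_le β)
        · exact lift_le β
    _ ≤ (2 * A * (D + 1) + (η + 2) * E) * (Nf + Ng + I + I') + η * L2sq L (wt m u) := by
        linarith

/-! ### Tangential derivatives -/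

/-- The commutator `[∂_s^k, a] h` of `∂_s^k` with multiplication by a tangential coefficient `a`. -/
noncomputable def dSCommutator (k : ℕ) (a : ℝ → ℝ) (h : ℝ → ℝ → ℝ) : ℝ → ℝ → ℝ :=
  dS k (fun s ψ => a s * h s ψ) - fun s ψ => a s * dS k h s ψ

section DSCommutator

variable {a : ℝ → ℝ} {h Q R : ℝ → ℝ → ℝ} {L B : ℝ} {k m : ℕ}

theorem smooth2_dSCommutator (ha : ContDiff ℝ ∞ a) (hh : Smooth2 h) (k : ℕ) :
    Smooth2 (dSCommutator k a h) :=
  ((hh.coeff_mul ha).smooth2_dS k).sub ((hh.smooth2_dS k).coeff_mul ha)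

theorem dPsi_dSCommutator (ha : ContDiff ℝ ∞ a) (hh : Smooth2 h) (k j : ℕ) :
    dPsi j (dSCommutator k a h) = dSCommutator k a (dPsi j h) := by
  simp only [dSCommutator]
  rw [((hh.coeff_mul ha).smooth2_dS k).dPsi_sub ((hh.smooth2_dS k).coeff_mul ha),
    ← (hh.coeff_mul ha).dS_dPsi, dPsi_coeff_mul, dPsi_coeff_mul, hh.dS_dPsi]

theorem dSCommutator_eq_sum (ha : ContDiff ℝ ∞ a) (hh : Smooth2 h) (k : ℕ) :
    dSCommutator k a h = fun s ψ =>
      ∑ i ∈ Finset.range k, k.choose i * iteratedDeriv (k - i) a s * dS i h s ψ := by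
  funext s ψ
  have leibniz : dS k (fun s ψ => a s * h s ψ) s ψ = ∑ i ∈ Finset.range (k + 1),
      k.choose i * dS i h s ψ * iteratedDeriv (k - i) a s := by
    simp only [dS, mul_comm (a _)]
    exact iteratedDeriv_fun_mul
      ((hh.contDiff_left ψ).contDiffAt.of_le (by exact_mod_cast le_top))
      (ha.contDiffAt.of_le (by exact_mod_cast le_top))
  rw [dSCommutator, Pi.sub_apply, Pi.sub_apply, leibniz, Finset.sum_range_succ, Nat.choose_self,
    Nat.sub_self, iteratedDeriv_zero, Nat.cast_one, one_mul, mul_comm (a s), add_sub_cancel_right]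
  simp only [mul_right_comm]

theorem exists_abs_iteratedDeriv_le (ha : ContDiff ℝ ∞ a) {K : Set ℝ} (hK : IsCompact K)
    (k : ℕ) :
    ∃ B, ∀ i ≤ k, ∀ s ∈ K, |iteratedDeriv i a s| ≤ B := by
  have cont : Continuous fun s => ∑ i ∈ Finset.range (k + 1), |iteratedDeriv i a s| :=
    continuous_finsetSum _ fun i _ => (contDiff_infty_iteratedDeriv ha i).continuous.abs
  obtain ⟨B, hB⟩ := hK.exists_bound_of_continuousOn cont.continuousOn
  refine ⟨B, fun i hi s hs => ?_⟩
  calc |iteratedDeriv i a s| ≤ ∑ i ∈ Finset.range (k + 1), |iteratedDeriv i a s| :=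
        Finset.single_le_sum (f := fun i => |iteratedDeriv i a s|) (fun _ _ => abs_nonneg _)
          (Finset.mem_range_succ_iff.2 hi)
    _ ≤ B := (le_abs_self _).trans (hB s hs)

theorem abs_choose_mul_iteratedDeriv_le (hB : ∀ i ≤ k, ∀ s ∈ Icc 0 L, |iteratedDeriv i a s| ≤ B)
    (i : ℕ) (s : ℝ) (hs : s ∈ Icc 0 L) :
    |k.choose i * iteratedDeriv (k - i) a s| ≤ 2 ^ k * B := by
  rw [abs_mul, Nat.abs_cast]
  gcongr
  · exact_mod_cast Nat.choose_le_two_pow k i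
  · exact hB _ (Nat.sub_le k i) s hs

theorem weightedL2_dSCommutator (ha : ContDiff ℝ ∞ a) (hh : Smooth2 h)
    (hB : ∀ i ≤ k, ∀ s ∈ Icc 0 L, |iteratedDeriv i a s| ≤ B)
    (hfin : ∀ i < k, WeightedL2 L m (dS i h)) : WeightedL2 L m (dSCommutator k a h) := by
  rw [dSCommutator_eq_sum ha hh]
  exact WeightedL2.finsetSum fun i hi => (hfin i (Finset.mem_range.1 hi)).coeff_mul
    ((contDiff_infty_iteratedDeriv ha _).continuous.const_mul _)
    (abs_choose_mul_iteratedDeriv_le hB i)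

theorem L2sq_wt_dSCommutator_le (ha : ContDiff ℝ ∞ a) (hh : Smooth2 h)
    (hB : ∀ i ≤ k, ∀ s ∈ Icc 0 L, |iteratedDeriv i a s| ≤ B)
    (hfin : ∀ i < k, WeightedL2 L m (dS i h)) :
    L2sq L (wt m (dSCommutator k a h)) ≤
      k * (2 ^ k * B) ^ 2 * ∑ i ∈ Finset.range k, L2sq L (wt m (dS i h)) := by
  have hc (i : ℕ) : Continuous fun s => k.choose i * iteratedDeriv (k - i) a s :=
    (contDiff_infty_iteratedDeriv ha _).continuous.const_mul _
  have hbound := abs_choose_mul_iteratedDeriv_le hB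
  rw [dSCommutator_eq_sum ha hh]
  refine (L2sq_wt_finsetSum_le fun i hi =>
    (hfin i (Finset.mem_range.1 hi)).coeff_mul (hc i) (hbound i)).trans ?_
  rw [Finset.card_range, mul_assoc, Finset.mul_sum _ _ ((2 ^ k * B) ^ 2)]
  gcongr with i hi
  exact L2sq_wt_coeff_mul_le (hc i) (hbound i) (hfin i (Finset.mem_range.1 hi))

-- In divergence form the commutator only costs `∂_ψ ∂_s^i Q` with `i < k`, whereas the estimate has
-- no control on `∂_ψ² ∂_s^i Q`.
theorem dS_one_dS_eq (ha : ContDiff ℝ ∞ a) (hQ : Smooth2 Q) (hR : Smooth2 R)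
    (heq : ∀ s, ∀ ψ > 0, dS 1 Q s ψ = a s * dPsi 2 Q s ψ + R s ψ) (k : ℕ) (s : ℝ) {ψ : ℝ}
    (hψ : 0 < ψ) :
    dS 1 (dS k Q) s ψ = a s * dPsi 2 (dS k Q) s ψ
      + dPsi 1 (dSCommutator k a (dPsi 1 Q)) s ψ + dS k R s ψ := by
  have slice : dS k (dS 1 Q) s ψ = dS k ((fun s ψ => a s * dPsi 2 Q s ψ) + R) s ψ :=
    congrArg (iteratedDeriv k · s) (funext fun s' => heq s' ψ hψ)
  rw [← dS_succ, dS_succ', slice, ((hQ.smooth2_dPsi 2).coeff_mul ha).dS_add hR,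
    dPsi_dSCommutator ha (hQ.smooth2_dPsi 1), ← dPsi_two, dSCommutator, hQ.dS_dPsi]
  simp only [Pi.add_apply, Pi.sub_apply]
  ring

end DSCommutator

theorem integral_iteratedDeriv_sq_le_HnormSq {L : ℝ} (hL : 0 ≤ L) {j n : ℕ} (hj : j ≤ n)
    (b : ℝ → ℝ) : ∫ s in (0 : ℝ)..L, iteratedDeriv j b s ^ 2 ≤ HnormSq L n b :=
  Finset.single_le_sum (f := fun j => ∫ s in (0 : ℝ)..L, iteratedDeriv j b s ^ 2)
    (fun _ _ => intervalIntegral.integral_nonneg hL fun _ _ => sq_nonneg _)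
    (Finset.mem_range_succ_iff.2 hj)

theorem exists_L2sq_dPsi_dS_le {L : ℝ} (hL : 0 ≤ L) (k m : ℕ) {a : ℝ → ℝ}
    (ha : ContDiff ℝ ∞ a) (hpos : ∀ s ∈ Icc 0 L, 0 < a s) {η : ℝ} (hη : 0 < η) :
    ∃ C > 0, ∀ Q R : ℝ → ℝ → ℝ, Smooth2 Q → PeriodicS L Q → Smooth2 R →
      (∀ s, ∀ ψ > 0, dS 1 Q s ψ = a s * dPsi 2 Q s ψ + R s ψ) →
      (∀ i ≤ k, WeightedL2 L m (dPsi 1 (dS i Q))) → WeightedL2 L m (dS k R) →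
      WeightedL2 L m (dS k Q) →
      L2sq L (wt m (dPsi 1 (dS k Q))) ≤ C * (L2sq L (wt m (dS k R))
        + HnormSq L (k + 1) (fun s => Q s 0)
        + ∑ i ∈ Finset.range k, L2sq L (wt m (dPsi 1 (dS i Q)))) + η * L2sq L (wt m (dS k Q)) := by
  obtain ⟨A, hA, estimate⟩ := exists_L2sq_dPsi_le hL m ha.continuous hpos hη
  obtain ⟨B, hB⟩ := exists_abs_iteratedDeriv_le ha (isCompact_Icc (a := 0) (b := L)) k
  set D : ℝ := k * (2 ^ k * B) ^ 2
  have hD : 0 ≤ D := by positivity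
  refine ⟨A * (D + 2), by positivity, fun Q R hQ hQper hR heq hdPsi hdR hdQ => ?_⟩
  have hfin (i : ℕ) (hi : i < k) : WeightedL2 L m (dS i (dPsi 1 Q)) :=
    hQ.dS_dPsi i 1 ▸ hdPsi i hi.le
  have hu : IsWeightedHeatSolution L m a (dS k Q) (dS k R) (dSCommutator k a (dPsi 1 Q)) :=
    { smooth := hQ.smooth2_dS k
      smooth_flux := smooth2_dSCommutator ha (hQ.smooth2_dPsi 1) k
      continuous_source := (hR.smooth2_dS k).continuous
      periodic := hQper.periodicS_dS k
      equation := fun s ψ hψ => dS_one_dS_eq ha hQ hR heq k s hψ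
      weightedL2 := hdQ
      weightedL2_dPsi := hdPsi k le_rfl
      weightedL2_source := hdR
      weightedL2_flux := weightedL2_dSCommutator ha (hQ.smooth2_dPsi 1) hB hfin }
  have hflux := L2sq_wt_dSCommutator_le ha (hQ.smooth2_dPsi 1) hB hfin
  simp only [hQ.dS_dPsi] at hflux
  have hI := integral_iteratedDeriv_sq_le_HnormSq hL k.le_succ fun s => Q s 0
  have hI' := integral_iteratedDeriv_sq_le_HnormSq hL (le_refl (k + 1)) fun s => Q s 0
  rw [iteratedDeriv_succ] at hI'
  have hH : 0 ≤ HnormSq L (k + 1) fun s => Q s 0 :=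
    (intervalIntegral.integral_nonneg hL fun _ _ => sq_nonneg _).trans hI
  have hNR := L2sq_nonneg L (wt m (dS k R))
  have hS : 0 ≤ ∑ i ∈ Finset.range k, L2sq L (wt m (dPsi 1 (dS i Q))) :=
    Finset.sum_nonneg fun _ _ => L2sq_nonneg _ _
  refine (estimate _ _ _ hu).trans (add_le_add_left ?_ _)
  rw [mul_assoc A]
  refine mul_le_mul_of_nonneg_left ?_ hA.le
  refine (add_le_add (add_le_add (add_le_add_right hflux _) hI) hI').trans ?_
  nlinarith [mul_nonneg hD hNR, mul_nonneg hD hH]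

theorem linear_prandtl_dpsi_estimate_general
    (L : ℝ) (hL : 0 < L)
    (q_e : ℝ → ℝ) (hqe : ContDiff ℝ (⊤ : ℕ∞) q_e) (hqepos : ∀ s ∈ Icc 0 L, 0 < q_e s)
    (ω₀ : ℝ) (hω₀ : 0 < ω₀) (k m : ℕ) (δ : ℝ) (hδ : 0 < δ) :
    ∃ C > (0:ℝ), ∀ Q F G : ℝ → ℝ → ℝ, ∀ b : ℝ → ℝ,
      Smooth2 Q → PeriodicS L Q → Smooth2 F → Smooth2 G →
      (∀ s : ℝ, ∀ ψ > (0:ℝ),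
        dS 1 Q s ψ - ω₀ * q_e s * dPsi 2 Q s ψ = F s ψ + dPsi 2 G s ψ) →
      (∀ s : ℝ, Q s 0 = b s) →
      (∀ k' ≤ k, FiniteL2 L (wt m (dPsi 1 (dS k' Q)))) →
      FiniteL2 L (wt m (dS k F)) → FiniteL2 L (wt m (dPsi 2 (dS k G))) →
      FiniteL2 L (wt m (dS k Q)) →
      L2sq L (wt m (dPsi 1 (dS k Q)))
        ≤ C * L2sq L (wt m (dS k F)) + C * L2sq L (wt m (dPsi 2 (dS k G)))
          + C * HnormSq L (k+1) b
          + δ * L2sq L (wt m (dS k Q))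
          + C * (∑ k' ∈ Finset.range k, L2sq L (wt m (dPsi 1 (dS k' Q)))) := by
  obtain ⟨C, hC, estimate⟩ := exists_L2sq_dPsi_dS_le (a := fun s => ω₀ * q_e s) hL.le k m
    (contDiff_const.mul hqe) (fun s hs => mul_pos hω₀ (hqepos s hs)) hδ
  refine ⟨2 * C, by positivity, fun Q F G b hQ hQper hF hG heq hb hdPsi hdF hdG hdQ => ?_⟩
  obtain rfl : (fun s => Q s 0) = b := funext hb
  have hG2 : Smooth2 (dPsi 2 G) := hG.smooth2_dPsi 2
  have split : dS k (F + dPsi 2 G) = dS k F + dPsi 2 (dS k G) := by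
    rw [hF.dS_add hG2, hG.dS_dPsi]
  have hwF := hdF.weightedL2 (hF.smooth2_dS k).continuous
  have hwG := hdG.weightedL2 ((hG.smooth2_dS k).smooth2_dPsi 2).continuous
  have source_le := mul_le_mul_of_nonneg_left (L2sq_wt_add_le hwF hwG) hC.le
  have bound := estimate Q (F + dPsi 2 G) hQ hQper (hF.add hG2)
    (fun s ψ hψ => sub_eq_iff_eq_add'.1 (heq s ψ hψ))
    (fun i hi => (hdPsi i hi).weightedL2 ((hQ.smooth2_dS i).smooth2_dPsi 1).continuous)
    (split ▸ hwF.add hwG) (hdQ.weightedL2 (hQ.smooth2_dS k).continuous)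
  rw [split] at bound
  have hH : 0 ≤ C * HnormSq L (k + 1) fun s => Q s 0 :=
    mul_nonneg hC.le ((intervalIntegral.integral_nonneg hL.le fun _ _ => sq_nonneg _).trans
      (integral_iteratedDeriv_sq_le_HnormSq hL.le k.le_succ _))
  have hS : 0 ≤ C * ∑ i ∈ Finset.range k, L2sq L (wt m (dPsi 1 (dS i Q))) :=
    mul_nonneg hC.le (Finset.sum_nonneg fun _ _ => L2sq_nonneg _ _)
  linarith

/-- **The `∂_ψ` energy estimate for the `s`-differentiated linear Prandtl problem.** -/
theorem linear_prandtl_dpsi_estimate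
    (L : ℝ) (hL : 0 < L)
    (q_e : ℝ → ℝ) (hqe : ContDiff ℝ (⊤ : ℕ∞) q_e) (hqeper : Function.Periodic q_e L)
    (hqepos : ∀ s, 0 < q_e s)
    (ω₀ : ℝ) (hω₀ : 0 < ω₀) (k m : ℕ) (δ : ℝ) (hδ : 0 < δ) :
    ∃ C > (0:ℝ), ∀ Q F G : ℝ → ℝ → ℝ, ∀ b : ℝ → ℝ,
      Smooth2 Q → PeriodicS L Q → Smooth2 F → PeriodicS L F →
      Smooth2 G → PeriodicS L G → ContDiff ℝ (⊤ : ℕ∞) b → Function.Periodic b L →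
      (∀ s : ℝ, ∀ ψ > (0:ℝ),
        dS 1 Q s ψ - ω₀ * q_e s * dPsi 2 Q s ψ = F s ψ + dPsi 2 G s ψ) →
      (∀ s : ℝ, Q s 0 = b s) →
      (∀ s : ℝ, Tendsto (fun ψ => Q s ψ) atTop (nhds 0)) →
      -- finiteness of all norms appearing
      (∀ k' ≤ k, FiniteL2 L (wt m (dPsi 1 (dS k' Q)))) →
      FiniteL2 L (wt m (dS k F)) → FiniteL2 L (wt m (dPsi 2 (dS k G))) →
      FiniteL2 L (wt m (dS k Q)) → FiniteL2 L (wt (m-1) (dS k Q)) →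
      L2sq L (wt m (dPsi 1 (dS k Q)))
        ≤ C * L2sq L (wt m (dS k F)) + C * L2sq L (wt m (dPsi 2 (dS k G)))
          + C * HnormSq L (k+1) b
          + δ * L2sq L (wt m (dS k Q))
          + C * (∑ k' ∈ Finset.range k, L2sq L (wt m (dPsi 1 (dS k' Q))))
          + (if 1 ≤ m then L2sq L (wt (m-1) (dS k Q)) else 0) := by
  obtain ⟨C, hC, estimate⟩ :=
    linear_prandtl_dpsi_estimate_general L hL q_e hqe (fun s _ => hqepos s) ω₀ hω₀ k m δ hδ
  refine ⟨C, hC, fun Q F G b hQ hQper hF _ hG _ _ _ heq hb _ hdPsi hdF hdG hdQ _ =>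
    (estimate Q F G b hQ hQper hF hG heq hb hdPsi hdF hdG hdQ).trans
      (le_add_of_nonneg_right ?_)⟩
  split_ifs
  exacts [L2sq_nonneg _ _, le_rfl]
end
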